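/- Corollary: Fix k ≥ 6. For every c > 0 there exists N such that any finite group G with |G| > N and any S ⊆ G × G with |S| ≥ c|G|² admits k elements of G spanning at least k − 3 triples (a, b, ab) from S. (The Brown–Erdős–Sós conjecture holds for finite groups when k is sufficiently large.) -/

import Mathlib

namespace BES
open Finset
open scoped BigOperators Classical

noncomputable def ind (p : Prop) : ℝ := if p then 1 else 0

lemma ind_nonneg (p : Prop) : 0 ≤ ind p := by unfold ind; split_ifs <;> norm_num
lemma ind_le_one (p : Prop) : ind p ≤ 1 := by unfold ind; split_ifs <;> norm_num
lemma ind_true {p : Prop} (h : p) : ind p = 1 := by simp [ind, h]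
lemma ind_false {p : Prop} (h : ¬ p) : ind p = 0 := by simp [ind, h]
lemma ind_mono {p q : Prop} (h : p → q) : ind p ≤ ind q := by
  by_cases hp : p
  · rw [ind_true hp, ind_true (h hp)]
  · rw [ind_false hp]; exact ind_nonneg _
lemma ind_pos {p : Prop} (h : 0 < ind p) : p := by
  by_contra hp; rw [ind_false hp] at h; exact lt_irrefl _ h

section av
variable {X Y : Type} [Fintype X] [Fintype Y]

noncomputable def av {X : Type} [Fintype X] (f : X → ℝ) : ℝ := (∑ x, f x) / (Fintype.card X : ℝ)

lemma av_add (f g : X → ℝ) : av (fun x => f x + g x) = av f + av g := by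
  simp [av, Finset.sum_add_distrib, add_div]
lemma av_sub (f g : X → ℝ) : av (fun x => f x - g x) = av f - av g := by
  simp [av, Finset.sum_sub_distrib, sub_div]
lemma av_mul (c : ℝ) (f : X → ℝ) : av (fun x => c * f x) = c * av f := by
  simp [av, ← Finset.mul_sum, mul_div_assoc]
lemma av_sum {ι : Type} (s : Finset ι) (f : ι → X → ℝ) :
    av (fun x => ∑ i ∈ s, f i x) = ∑ i ∈ s, av (f i) := by
  simp only [av]
  rw [Finset.sum_comm, Finset.sum_div]
lemma av_const [Nonempty X] (c : ℝ) : av (fun _ : X => c) = c := by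
  simp [av]
lemma av_le_av {f g : X → ℝ} (h : ∀ x, f x ≤ g x) : av f ≤ av g := by
  unfold av
  exact div_le_div_of_nonneg_right (Finset.sum_le_sum fun x _ => h x) (Nat.cast_nonneg _)
lemma av_nonneg {f : X → ℝ} (h : ∀ x, 0 ≤ f x) : 0 ≤ av f := by
  unfold av
  exact div_nonneg (Finset.sum_nonneg fun x _ => h x) (Nat.cast_nonneg _)
lemma av_le [Nonempty X] {f : X → ℝ} {c : ℝ} (h : ∀ x, f x ≤ c) : av f ≤ c := by
  have := av_le_av (g := fun _ => c) h; rwa [av_const] at this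
lemma le_av [Nonempty X] {f : X → ℝ} {c : ℝ} (h : ∀ x, c ≤ f x) : c ≤ av f := by
  have := av_le_av (f := fun _ => c) h; rwa [av_const] at this
lemma av_comm (f : X → Y → ℝ) : av (fun x => av (f x)) = av (fun y => av (fun x => f x y)) := by
  simp only [av, ← Finset.sum_div]
  rw [Finset.sum_comm, div_div, div_div, mul_comm]
lemma av_prod (f : X × Y → ℝ) : av f = av (fun x => av (fun y => f (x, y))) := by
  simp only [av, ← Finset.sum_div]
  rw [Fintype.sum_prod_type, div_div, Fintype.card_prod, Nat.cast_mul, mul_comm]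
lemma av_equiv (e : X ≃ Y) (f : Y → ℝ) : av f = av (fun x => f (e x)) := by
  simp only [av]
  rw [Fintype.card_congr e, Equiv.sum_comp e]
lemma exists_le_of_le_av [Nonempty X] {f : X → ℝ} {c : ℝ} (h : c ≤ av f) : ∃ x, c ≤ f x := by
  by_contra! hc
  have : ∑ x, f x < ∑ _x : X, c := Finset.sum_lt_sum_of_nonempty Finset.univ_nonempty (fun x _ => hc x)
  have hpos : (0 : ℝ) < Fintype.card X := by exact_mod_cast Fintype.card_pos
  have h2 : av f < c := by
    unfold av
    rw [div_lt_iff₀ hpos]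
    simpa [mul_comm] using this
  linarith
lemma single_le_av {f : X → ℝ} (h : ∀ x, 0 ≤ f x) (x : X) : f x / Fintype.card X ≤ av f := by
  unfold av
  exact div_le_div_of_nonneg_right (Finset.single_le_sum (fun y _ => h y) (Finset.mem_univ x)) (Nat.cast_nonneg _)

/-- Markov -/
lemma av_markov [Nonempty X] {f : X → ℝ} (h1 : ∀ x, f x ≤ 1) {δ : ℝ} (hδ : 0 < δ)
    (h : δ ≤ av f) : δ / 2 ≤ av (fun x => ind (δ / 2 ≤ f x)) := by
  have : av f ≤ av (fun x => δ / 2 + ind (δ / 2 ≤ f x)) := by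
    apply av_le_av
    intro x
    by_cases hx : δ / 2 ≤ f x
    · rw [ind_true hx]; linarith [h1 x]
    · rw [ind_false hx]; linarith
  rw [av_add, av_const] at this
  linarith

lemma av_append {β : Type} [Fintype β] {m n : ℕ} (f : (Fin (m + n) → β) → ℝ) :
    av f = av (fun x : Fin m → β => av (fun y : Fin n → β => f (Fin.append x y))) := by
  rw [av_equiv (Fin.appendEquiv m n) f, av_prod]
  rfl

end av

/-- pigeonhole: if every good y has a witness, some witness is good for many y -/
lemma av_pigeon {Y W : Type} [Fintype Y] [Nonempty Y] [Fintype W] [Nonempty W] {δ : ℝ}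
    (P : Y → Prop) (Q : W → Y → Prop) (h : ∀ y, P y → ∃ w, Q w y)
    (hP : δ ≤ av (fun y => ind (P y))) :
    ∃ w, δ / Fintype.card W ≤ av (fun y => ind (Q w y)) := by
  have h1 : δ ≤ ∑ w : W, av (fun y => ind (Q w y)) := by
    rw [← av_sum]
    refine hP.trans (av_le_av fun y => ?_)
    by_cases hy : P y
    · obtain ⟨w, hw⟩ := h y hy
      rw [ind_true hy]
      calc (1 : ℝ) = ind (Q w y) := (ind_true hw).symm
        _ ≤ _ := Finset.single_le_sum (f := fun w => ind (Q w y)) (fun _ _ => ind_nonneg _) (Finset.mem_univ w)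
    · rw [ind_false hy]; exact Finset.sum_nonneg fun _ _ => ind_nonneg _
  apply exists_le_of_le_av
  unfold av
  exact div_le_div_of_nonneg_right h1 (Nat.cast_nonneg _)

noncomputable def dens {X : Type} [Fintype X] (A : Set X) : ℝ := av (fun x => ind (x ∈ A))

lemma dens_nonneg {X : Type} [Fintype X] (A : Set X) : 0 ≤ dens A := av_nonneg fun _ => ind_nonneg _
lemma dens_le_one {X : Type} [Fintype X] [Nonempty X] (A : Set X) : dens A ≤ 1 := av_le fun _ => ind_le_one _

lemma dens_append {β : Type} [Fintype β] {m n : ℕ} (A : Set (Fin (m + n) → β)) :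
    dens A = av (fun x : Fin m → β => dens {y : Fin n → β | Fin.append x y ∈ A}) := av_append _

/-- points of a line given by a variable word -/
def sub {α : Type} {n : ℕ} (w : Fin n → Option α) (a : α) : Fin n → α := fun i => (w i).getD a

/-- evaluation of a subspace template -/
def ev {α κ : Type} {n : ℕ} (v : Fin n → α ⊕ κ) (x : κ → α) : Fin n → α := fun i => Sum.elim id x (v i)

def Sp {α κ : Type} {n : ℕ} (v : Fin n → α ⊕ κ) : Prop := ∀ e, ∃ i, v i = Sum.inr e

def HasLine {α : Type} {n : ℕ} (A : Set (Fin n → α)) : Prop :=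
  ∃ w : Fin n → Option α, (∃ i, w i = none) ∧ ∀ a, sub w a ∈ A

def DHJ (α : Type) [Fintype α] : Prop :=
  ∀ δ : ℝ, 0 < δ → ∃ N : ℕ, ∀ n ≥ N, ∀ A : Set (Fin n → α), δ ≤ dens A → HasLine A

lemma ev_injective {α κ : Type} {n : ℕ} {v : Fin n → α ⊕ κ} (hv : Sp v) :
    Function.Injective (ev v) := by
  intro x y h
  funext e
  obtain ⟨i, hi⟩ := hv e
  have := congrFun h i
  simpa [ev, hi] using this

/-- uniform fibres -/
lemma UF {β : Type} [Fintype β] [Nonempty β] (F : ∀ n, Set (Fin n → β) → Prop)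
    (hF : ∀ m l (A : Set (Fin (m + l) → β)), F (m + l) A →
      ∀ x : Fin m → β, F l {y | Fin.append x y ∈ A}) (δ : ℝ)
    (hδ : ∀ N, ∃ n ≥ N, ∃ A, F n A ∧ δ ≤ dens A) :
    ∃ ρ ≥ δ, ∀ ε > 0, (∃ L, ∀ l ≥ L, ∀ A, F l A → dens A ≤ ρ + ε) ∧
      ∀ m, ∃ l, ∃ A, F (m + l) A ∧ ∀ x : Fin m → β, ρ - ε ≤ dens {y : Fin l → β | Fin.append x y ∈ A} := by
  have hδ' : ∀ n, ∃ A, F n A ∧ δ ≤ dens A := by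
    intro n
    obtain ⟨N, hN, A, hA, hd⟩ := hδ n
    obtain ⟨m, rfl⟩ := Nat.exists_eq_add_of_le' hN
    rw [dens_append] at hd
    obtain ⟨x, hx⟩ := exists_le_of_le_av hd
    exact ⟨_, hF m n A hA x, hx⟩
  let s : ℕ → Set ℝ := fun n => {r | ∃ A, F n A ∧ r = dens A}
  have hsb : ∀ n, BddAbove (s n) := fun n => ⟨1, by rintro _ ⟨A, _, rfl⟩; exact dens_le_one A⟩
  have hsn : ∀ n, (s n).Nonempty := fun n => by
    obtain ⟨A, hA, _⟩ := hδ' n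
    exact ⟨_, A, hA, rfl⟩
  let g : ℕ → ℝ := fun n => sSup (s n)
  have hg : ∀ n A, F n A → dens A ≤ g n := fun n A hA => le_csSup (hsb n) ⟨A, hA, rfl⟩
  have hgδ : ∀ n, δ ≤ g n := fun n => by
    obtain ⟨A, hA, h⟩ := hδ' n
    exact h.trans (hg n A hA)
  have hganti : ∀ m l, g (m + l) ≤ g l := by
    intro m l
    apply csSup_le (hsn _)
    rintro _ ⟨A, hA, rfl⟩
    rw [dens_append]
    exact av_le fun x => hg l _ (hF m l A hA x)
  have hbb : BddBelow (Set.range g) := ⟨δ, by rintro _ ⟨n, rfl⟩; exact hgδ n⟩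
  refine ⟨⨅ n, g n, le_ciInf hgδ, ?_⟩
  set ρ := ⨅ n, g n with hρ
  have hup : ∀ ε > 0, ∃ L, ∀ l ≥ L, ∀ A, F l A → dens A ≤ ρ + ε := by
    intro ε hε
    obtain ⟨L, hL⟩ := exists_lt_of_ciInf_lt (show ⨅ n, g n < ρ + ε by linarith)
    refine ⟨L, fun l hl A hA => ?_⟩
    obtain ⟨m, rfl⟩ := Nat.exists_eq_add_of_le' hl
    exact (hg _ A hA).trans ((hganti m L).trans hL.le)
  intro ε hε
  refine ⟨hup ε hε, fun m => ?_⟩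
  set K : ℝ := (Fintype.card (Fin m → β) : ℝ) with hK
  have hKpos : 0 < K := by rw [hK]; exact_mod_cast Fintype.card_pos
  have hε' : 0 < ε / (2 * K) := by positivity
  obtain ⟨l, hl⟩ := hup (ε / (2 * K)) hε'
  obtain ⟨_, ⟨A, hA, rfl⟩, hAd⟩ := exists_lt_of_lt_csSup (hsn (m + l)) (show g (m + l) - ε / (2 * K) < g (m + l) by linarith)
  have hAd' : ρ - ε / (2 * K) ≤ dens A := by
    have : ρ ≤ g (m + l) := ciInf_le hbb _
    linarith
  refine ⟨l, A, hA, fun x => ?_⟩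
  rw [dens_append] at hAd'
  unfold av at hAd'
  rw [le_div_iff₀ hKpos, ← Finset.add_sum_erase _ _ (Finset.mem_univ x)] at hAd'
  have h2 : ∑ x' ∈ Finset.univ.erase x, dens {y : Fin l → β | Fin.append x' y ∈ A} ≤
      ∑ x' ∈ Finset.univ.erase x, (ρ + ε / (2 * K)) :=
    Finset.sum_le_sum fun x' _ => hl l le_rfl _ (hF m l A hA x')
  rw [Finset.sum_const, nsmul_eq_mul, Finset.card_erase_of_mem (Finset.mem_univ x), Finset.card_univ,
    Nat.cast_sub Fintype.card_pos, ← hK, Nat.cast_one] at h2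
  have h3 : ε / (2 * K) * K = ε / 2 := by field_simp
  nlinarith

/-- probabilistic version -/
lemma PD {α : Type} [Fintype α] [Nonempty α] (h : DHJ α) (δ : ℝ) (hδ : 0 < δ) :
    ∃ m : ℕ, ∃ θ > 0, ∀ (Y : Type) [Fintype Y] [Nonempty Y] (A : (Fin m → α) → Set Y),
      δ ≤ av (fun x => dens (A x)) →
      ∃ w : Fin m → Option α, (∃ i, w i = none) ∧ θ ≤ dens {y | ∀ a, y ∈ A (sub w a)} := by
  obtain ⟨m, hm⟩ := h (δ / 2) (by positivity)
  have hm := hm m le_rfl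
  refine ⟨m, δ / 2 / Fintype.card (Fin m → Option α), by positivity, ?_⟩
  intro Y _ _ A hA
  simp only [dens] at hA
  rw [av_comm] at hA
  have h1 := av_markov (fun y => av_le fun x => ind_le_one _) hδ hA
  obtain ⟨w, hw⟩ := av_pigeon (W := Fin m → Option α) _
    (fun w y => (∃ i, w i = none) ∧ ∀ a, y ∈ A (sub w a))
    (fun y hy => hm {x | y ∈ A x} hy) h1
  have hpos : 0 < av (fun y => ind ((∃ i, w i = none) ∧ ∀ a, y ∈ A (sub w a))) :=
    lt_of_lt_of_le (by positivity) hw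
  obtain ⟨y, hy⟩ := exists_le_of_le_av (le_refl (av (fun y => ind ((∃ i, w i = none) ∧ ∀ a, y ∈ A (sub w a)))))
  have hy' := ind_pos (hpos.trans_le hy)
  refine ⟨w, hy'.1, hw.trans (av_le_av fun y => ind_mono fun h => h.2)⟩

/-- multidimensional version -/
lemma MD {α : Type} [Fintype α] [Nonempty α] (h : DHJ α) (d : ℕ) : ∀ (δ : ℝ), 0 < δ →
    ∃ n : ℕ, ∀ A : Set (Fin n → α), δ ≤ dens A → ∃ v : Fin n → α ⊕ Fin d, Sp v ∧ ∀ x, ev v x ∈ A := by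
  induction d with
  | zero =>
    intro δ hδ
    refine ⟨0, fun A hA => ⟨fun i => i.elim0, fun e => e.elim0, fun x => ?_⟩⟩
    obtain ⟨y, hy⟩ := exists_le_of_le_av hA
    have := ind_pos (hδ.trans_le hy)
    convert this using 1
  | succ d ih =>
    intro δ hδ
    obtain ⟨m, θ, hθ, hm⟩ := PD h δ hδ
    obtain ⟨n, hn⟩ := ih θ hθ
    refine ⟨m + n, fun A hA => ?_⟩
    rw [dens_append] at hA
    obtain ⟨w, ⟨i₀, hi₀⟩, hw⟩ := hm _ _ hA
    obtain ⟨v, hv, hvA⟩ := hn _ hw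
    refine ⟨Fin.append (fun i => (w i).elim (Sum.inr 0) Sum.inl) (fun i => Sum.map id Fin.succ (v i)), ?_, ?_⟩
    · intro e
      refine Fin.cases ?_ (fun e => ?_) e
      · exact ⟨Fin.castAdd n i₀, by simp [hi₀]⟩
      · obtain ⟨i, hi⟩ := hv e
        exact ⟨Fin.natAdd m i, by simp [hi]⟩
    · intro x
      have := hvA (fun e => x e.succ) (x 0)
      simp only [Set.mem_ofPred_eq] at this
      convert this using 1
      funext i
      refine Fin.addCases (fun i => ?_) (fun i => ?_) i
      · simp only [ev, sub, Fin.append_left]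
        cases w i <;> simp
      · simp only [ev, Fin.append_right]
        cases v i <;> simp

end BES

namespace BES
open Finset
open scoped BigOperators Classical

/-- extend a template to the larger alphabet -/
def lift {α κ : Type} {n : ℕ} (v : Fin n → α ⊕ κ) : Fin n → Option α ⊕ κ := fun i => Sum.map some id (v i)

lemma lift_Sp {α κ : Type} {n : ℕ} {v : Fin n → α ⊕ κ} (hv : Sp v) : Sp (lift v) := by
  intro e
  obtain ⟨i, hi⟩ := hv e
  exact ⟨i, by simp [lift, hi]⟩

def comp {α κ : Type} {n m : ℕ} (v : Fin n → α ⊕ Fin m) (u : Fin m → α ⊕ κ) : Fin n → α ⊕ κ :=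
  fun i => Sum.elim Sum.inl u (v i)

lemma ev_comp {α κ : Type} {n m : ℕ} (v : Fin n → α ⊕ Fin m) (u : Fin m → α ⊕ κ) (x : κ → α) :
    ev (comp v u) x = ev v (ev u x) := by
  funext i
  simp only [ev, comp]
  cases v i <;> simp [ev]

lemma comp_Sp {α κ : Type} {n m : ℕ} {v : Fin n → α ⊕ Fin m} {u : Fin m → α ⊕ κ}
    (hv : Sp v) (hu : Sp u) : Sp (comp v u) := by
  intro e
  obtain ⟨j, hj⟩ := hu e
  obtain ⟨i, hi⟩ := hv j
  exact ⟨i, by simp [comp, hi, hj]⟩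

lemma lift_comp {α κ : Type} {n m : ℕ} (v : Fin n → α ⊕ Fin m) (u : Fin m → α ⊕ κ) :
    lift (comp v u) = comp (lift v) (lift u) := by
  funext i
  simp only [lift, comp]
  cases v i <;> simp [lift]

/-- Graham--Rothschild for lines, stage one -/
lemma GR0 (α : Type) [Fintype α] (M : ℕ) : ∀ (C : Type) [Finite C], ∃ n : ℕ, ∀ c : (Fin n → Option α) → C,
    ∃ v : Fin n → α ⊕ Fin M, Sp v ∧ ∀ (i : Fin M) (l l' : Fin M → Option α),
      l i = none → l' i = none → (∀ j < i, l j ≠ none ∧ l j = l' j) →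
        c (ev (lift v) l) = c (ev (lift v) l') := by
  induction M with
  | zero =>
    intro C _
    exact ⟨0, fun c => ⟨fun i => i.elim0, fun e => e.elim0, fun i => i.elim0⟩⟩
  | succ M ih =>
    intro C _
    obtain ⟨n', hn'⟩ := ih (α → C)
    obtain ⟨N, hN⟩ := Combinatorics.Subspace.exists_mono_in_high_dimension_fin (Option α) C (Fin n')
    refine ⟨N + 1, fun c => ?_⟩
    obtain ⟨τ, c0, hτ⟩ := hN (fun v => c (Fin.cons none v))
    -- colouring for the induction
    obtain ⟨v', hv', hg'⟩ := hn' (fun l a => c (Fin.cons (some a)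
      (fun i => Sum.elim (fun o : Option α => some (o.getD a)) l (τ.idxFun i))))
    have key0 : ∀ l : Fin (M + 1) → Option α, l 0 = none →
        ev (lift (Fin.cons (Sum.inr 0) (fun i => Sum.elim (fun o : Option α => o.elim (Sum.inr 0) Sum.inl)
      (fun j => Sum.map id Fin.succ (v' j)) (τ.idxFun i)) : Fin (N + 1) → α ⊕ Fin (M + 1))) l
        = Fin.cons none (τ (ev (lift v') (fun j => l j.succ))) := by
      intro l h0
      funext i
      refine Fin.cases ?_ (fun i => ?_) i
      · simp [ev, lift, h0]
      · simp only [ev, lift, Fin.cons_succ, Combinatorics.Subspace.apply_def]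
        rcases τ.idxFun i with o | j
        · cases o <;> simp [h0]
        · cases h : v' j <;> simp [h, ev, lift]
    have key1 : ∀ (l : Fin (M + 1) → Option α) (a : α), l 0 = some a →
        ev (lift (Fin.cons (Sum.inr 0) (fun i => Sum.elim (fun o : Option α => o.elim (Sum.inr 0) Sum.inl)
      (fun j => Sum.map id Fin.succ (v' j)) (τ.idxFun i)) : Fin (N + 1) → α ⊕ Fin (M + 1))) l
        = Fin.cons (some a) (fun i => Sum.elim (fun o : Option α => some (o.getD a))
            (ev (lift v') (fun j => l j.succ)) (τ.idxFun i)) := by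
      intro l a h0
      funext i
      refine Fin.cases ?_ (fun i => ?_) i
      · simp [ev, lift, h0]
      · simp only [ev, lift, Fin.cons_succ]
        rcases τ.idxFun i with o | j
        · cases o <;> simp [h0]
        · cases h : v' j <;> simp [h, ev, lift]
    refine ⟨Fin.cons (Sum.inr 0) (fun i => Sum.elim (fun o : Option α => o.elim (Sum.inr 0) Sum.inl)
      (fun j => Sum.map id Fin.succ (v' j)) (τ.idxFun i)), ?_, ?_⟩
    · intro e
      refine Fin.cases ⟨0, by simp⟩ (fun e => ?_) e
      obtain ⟨j, hj⟩ := hv' e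
      obtain ⟨i, hi⟩ := τ.proper j
      exact ⟨i.succ, by simp [hi, hj]⟩
    · intro i
      refine Fin.cases ?_ (fun i => ?_) i
      · intro l l' hl hl' _
        rw [key0 l hl, key0 l' hl']
        exact (hτ _).trans (hτ _).symm
      · intro l l' hl hl' hj
        obtain ⟨h0, h00⟩ := hj 0 (Fin.succ_pos i)
        obtain ⟨a, ha⟩ := Option.ne_none_iff_exists'.mp h0
        rw [key1 l a ha, key1 l' a (h00 ▸ ha)]
        exact congrFun (hg' i (fun j => l j.succ) (fun j => l' j.succ) hl hl'
          (fun j hji => hj j.succ (Fin.succ_lt_succ_iff.mpr hji))) a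

/-- stage two -/
lemma GR1 (α : Type) [Fintype α] [Nonempty α] (C : Type) [Finite C] (m : ℕ) : ∃ M : ℕ,
    ∀ h : Fin M → (Fin M → α) → C, (∀ i x x', (∀ j < i, x j = x' j) → h i x = h i x') →
    ∃ v : Fin M → α ⊕ Fin m, ∃ p : Fin m → Fin M, ∃ g : Fin m → C, ∀ e,
      v (p e) = Sum.inr e ∧ (∀ j < p e, ∀ e' ≥ e, v j ≠ Sum.inr e') ∧ ∀ x, h (p e) (ev v x) = g e := by
  induction m with
  | zero => exact ⟨0, fun h _ => ⟨fun i => i.elim0, fun i => i.elim0, fun i => i.elim0, fun i => i.elim0⟩⟩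
  | succ m ih =>
    obtain ⟨M0, hM0⟩ := ih
    obtain ⟨N, hN⟩ := Combinatorics.Subspace.exists_mono_in_high_dimension_fin α
      (Fin M0 → (Fin M0 → α) → C) Unit
    refine ⟨N + M0, fun h hh => ?_⟩
    obtain ⟨τ, c0, hτ⟩ := hN (fun r i u => h (Fin.natAdd N i) (Fin.append r u))
    obtain ⟨v', p', g', hv'⟩ := hM0 c0 (by
      intro i x x' hx
      rw [← hτ (fun _ => Classical.arbitrary α)]
      apply hh
      intro j hj
      revert hj
      refine Fin.addCases (fun j _ => ?_) (fun j hj => ?_) j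
      · simp
      · simpa using hx j (by simpa using hj))
    have hex : ∃ k : ℕ, ∃ hk : k < N, τ.idxFun ⟨k, hk⟩ = Sum.inr () := by
      obtain ⟨i, hi⟩ := τ.proper ()
      exact ⟨i.1, i.2, hi⟩
    let k := Nat.find hex
    obtain ⟨hk, hk2⟩ := Nat.find_spec hex
    have hmin : ∀ j : Fin N, j.1 < k → τ.idxFun j ≠ Sum.inr () := by
      intro j hj hjj
      exact Nat.find_min hex hj ⟨j.2, hjj⟩
    let v : Fin (N + M0) → α ⊕ Fin (m + 1) :=
      Fin.append (fun i => Sum.map id (fun _ => 0) (τ.idxFun i)) (fun i => Sum.map id Fin.succ (v' i))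
    have hev : ∀ x, ev v x = Fin.append (τ (fun _ => x 0)) (ev v' (fun e => x e.succ)) := by
      intro x
      funext i
      refine Fin.addCases (fun i => ?_) (fun i => ?_) i
      · simp only [ev, v, Fin.append_left, Combinatorics.Subspace.apply_def]
        cases τ.idxFun i <;> simp
      · simp only [ev, v, Fin.append_right]
        cases v' i <;> simp
    refine ⟨v, Fin.cons (Fin.castAdd M0 ⟨k, hk⟩) (fun e => Fin.natAdd N (p' e)),
      Fin.cons (h (Fin.castAdd M0 ⟨k, hk⟩) (ev v (fun _ => Classical.arbitrary α))) g', ?_⟩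
    have hlow : ∀ j : Fin (N + M0), j < Fin.castAdd M0 ⟨k, hk⟩ → ∀ e', v j ≠ Sum.inr e' := by
      intro j
      refine Fin.addCases (fun j hj e' => ?_) (fun j hj => ?_) j
      · have hj' : j.1 < k := by simpa [Fin.lt_def] using hj
        have := hmin j hj'
        simp only [v, Fin.append_left]
        rcases hτj : τ.idxFun j with a | u
        · simp
        · exact absurd hτj this
      · exfalso
        simp [Fin.lt_def] at hj
        omega
    intro e
    refine Fin.cases ?_ (fun e => ?_) e
    · refine ⟨by show v (Fin.castAdd M0 ⟨k,hk⟩) = _; simp only [v, Fin.append_left]; rw [show τ.idxFun ⟨k,hk⟩ = Sum.inr () from hk2]; rfl, fun j hj e' _ => hlow j (by simpa using hj) e', fun x => ?_⟩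
      simp only [Fin.cons_zero]
      apply hh
      intro j hj
      have := hlow j hj
      simp only [ev]
      rcases hvj : v j with a | e'
      · rfl
      · exact absurd hvj (this e')
    · obtain ⟨h1, h2, h3⟩ := hv' e
      refine ⟨by simp [v, h1], ?_, fun x => ?_⟩
      · intro j
        refine Fin.addCases (fun j hj e' he' => ?_) (fun j hj e' he' => ?_) j
        · simp only [v, Fin.append_left]
          rcases hτj : τ.idxFun j with a | u
          · simp
          · simp only [Sum.map_inr, ne_eq, Sum.inr.injEq]
            rintro rfl
            simp at he'
        · simp only [v, Fin.append_right]
          have hj' : j < p' e := by simpa using hj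
          rcases hvj : v' j with a | u
          · simp
          · simp only [Sum.map_inr, ne_eq, Sum.inr.injEq]
            rintro rfl
            exact h2 j hj' u (by simpa using he') hvj
      · simp only [Fin.cons_succ]
        rw [hev, ← h3 (fun e => x e.succ), ← hτ (fun _ => x 0)]

/-- Graham--Rothschild for lines -/
lemma GR (α : Type) [Fintype α] [Nonempty α] (m : ℕ) : ∃ n : ℕ, ∀ c : (Fin n → Option α) → Prop,
    ∃ v : Fin n → α ⊕ Fin m, Sp v ∧ ∀ l l' : Fin m → Option α,
      (∃ i, l i = none) → (∃ i, l' i = none) → c (ev (lift v) l) → c (ev (lift v) l') := by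
  obtain ⟨M, hM⟩ := GR1 α Prop (2 * m)
  obtain ⟨n, hn⟩ := GR0 α M Prop
  refine ⟨n, fun c => ?_⟩
  obtain ⟨v, hv, hvc⟩ := hn c
  let W : Fin M → (Fin M → α) → (Fin M → Option α) := fun i x j => if j < i then some (x j) else none
  obtain ⟨u, p, g, hu⟩ := hM (fun i x => c (ev (lift v) (W i x))) (by
    intro i x x' hx
    have : W i x = W i x' := by
      funext j
      simp only [W]
      split_ifs with hj
      · rw [hx j hj]
      · rfl
    simp only [this])
  have key : ∀ (l : Fin (2 * m) → Option α) (e : Fin (2 * m)), l e = none → (∀ e' < e, l e' ≠ none) →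
      c (ev (lift v) (ev (lift u) l)) = g e := by
    intro l e hle hlt
    obtain ⟨h1, h2, h3⟩ := hu e
    rw [← h3 (fun e' => (l e').getD (Classical.arbitrary α))]
    apply hvc (p e)
    · simp [ev, lift, h1, hle]
    · simp [W]
    · intro j hj
      have h2j := h2 j hj
      simp only [W, if_pos hj]
      rcases huj : u j with a | e'
      · simp [ev, lift, huj]
      · have he' : e' < e := by
          by_contra hc
          exact h2j e' (not_lt.mp hc) huj
        obtain ⟨a, ha⟩ := Option.ne_none_iff_exists'.mp (hlt e' he')
        simp [ev, lift, huj, ha]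
  obtain ⟨y, hy⟩ := Fintype.exists_le_card_fiber_of_mul_le_card (f := g) (n := m) (by simp)
  let φ := Finset.orderEmbOfCardLe _ hy
  have hφ : ∀ i, g (φ i) = y := by
    intro i
    have := Finset.orderEmbOfCardLe_mem _ hy i
    exact (Finset.mem_filter.mp this).2
  let s : Fin (2 * m) → α ⊕ Fin m := fun e => if h : ∃ i, φ i = e then Sum.inr h.choose else Sum.inl (Classical.arbitrary α)
  have hs : ∀ i, s (φ i) = Sum.inr i := by
    intro i
    have h : ∃ i', φ i' = φ i := ⟨i, rfl⟩
    simp only [s, dif_pos h]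
    congr 1
    exact φ.injective h.choose_spec
  have hs' : ∀ e i, s e = Sum.inr i → e = φ i := by
    intro e i he
    by_cases h : ∃ i', φ i' = e
    · obtain ⟨i', rfl⟩ := h
      rw [hs] at he
      simp at he
      rw [he]
    · simp [s, dif_neg h] at he
  have hsSp : Sp s := fun i => ⟨φ i, hs i⟩
  have huSp : Sp u := fun e => ⟨p e, (hu e).1⟩
  have key2 : ∀ l : Fin m → Option α, (∃ i, l i = none) → c (ev (lift (comp v (comp u s))) l) = y := by
    intro l hl
    rw [lift_comp, lift_comp, ev_comp, ev_comp]
    have hne : (Finset.univ.filter fun i => l i = none).Nonempty := by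
      obtain ⟨i, hi⟩ := hl; exact ⟨i, by simp [hi]⟩
    set i := (Finset.univ.filter fun i => l i = none).min' hne with hi
    have hmem : l i = none := by
      have := Finset.min'_mem _ hne
      rw [← hi] at this
      simpa using this
    rw [key _ (φ i), hφ]
    · simp [ev, lift, hs, hmem]
    · intro e' he'
      simp only [ev, lift]
      rcases hse : s e' with a | i'
      · simp
      · have := hs' e' i' hse
        rw [this] at he'
        have hlt : i' < i := φ.lt_iff_lt.mp he'
        simp only [Sum.map_inr, Sum.elim_inr, id]
        intro hnone
        have : i ≤ i' := Finset.min'_le _ _ (by simp [hnone])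
        exact absurd hlt (not_lt.mpr this)
  refine ⟨comp v (comp u s), comp_Sp hv (comp_Sp huSp hsSp), fun l l' hl hl' h => ?_⟩
  rw [key2 l' hl', ← key2 l hl]
  exact h
end BES

namespace BES
open Finset
open scoped BigOperators Classical

def Ins {α : Type} {n : ℕ} (a : α) (E : Set (Fin n → Option α)) : Prop :=
  ∀ x x', sub x a = sub x' a → (x ∈ E ↔ x' ∈ E)

lemma sub_append {α : Type} {m l : ℕ} (a : α) (x : Fin m → Option α) (y : Fin l → Option α) :
    sub (Fin.append x y) a = Fin.append (sub x a) (sub y a) := by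
  funext i
  refine Fin.addCases (fun i => ?_) (fun i => ?_) i <;> simp [sub]

lemma sub_some {α : Type} {m : ℕ} (a : α) (x : Fin m → α) :
    sub (fun i => some (x i)) a = x := by
  funext i
  simp [sub]

lemma sub_ev {α κ : Type} {m : ℕ} (a : α) (v : Fin m → Option α ⊕ κ) (x x' : κ → Option α)
    (h : ∀ e, (x e).getD a = (x' e).getD a) : sub (ev v x) a = sub (ev v x') a := by
  funext i
  simp only [sub, ev]
  cases v i
  · simp
  · simp [h]

lemma Ins.fib {α : Type} {m l : ℕ} {a : α} {E : Set (Fin (m + l) → Option α)} (h : Ins a E)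
    (x : Fin m → Option α) : Ins a {y | Fin.append x y ∈ E} := by
  intro y y' hy
  apply h
  rw [sub_append, sub_append, hy]

lemma Ins.fib' {α : Type} {m l : ℕ} {a : α} {E : Set (Fin (m + l) → Option α)} (h : Ins a E)
    (y : Fin l → Option α) : Ins a {x | Fin.append x y ∈ E} := by
  intro x x' hy
  apply h
  rw [sub_append, sub_append, hy]

lemma Ins.ev {α : Type} {m l : ℕ} {a : α} {E : Set (Fin m → Option α)} (h : Ins a E)
    (v : Fin m → Option α ⊕ Fin l) : Ins a {x | BES.ev v x ∈ E} := by
  intro x x' hx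
  apply h
  exact sub_ev a v x x' (fun e => congrFun hx e)

lemma ev_appL {β κ : Type} {m l : ℕ} (x : Fin m → β) (v : Fin l → β ⊕ κ) (z : κ → β) :
    ev (Fin.append (fun i => Sum.inl (x i)) v) z = Fin.append x (ev v z) := by
  funext i
  refine Fin.addCases (fun i => ?_) (fun i => ?_) i <;> simp [ev]

lemma ev_appR {β κ : Type} {m l : ℕ} (y : Fin l → β) (v : Fin m → β ⊕ κ) (z : κ → β) :
    ev (Fin.append v (fun i => Sum.inl (y i))) z = Fin.append (ev v z) y := by
  funext i
  refine Fin.addCases (fun i => ?_) (fun i => ?_) i <;> simp [ev]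

lemma Sp_appL {β κ : Type} {m l : ℕ} (x : Fin m → β ⊕ κ) {v : Fin l → β ⊕ κ} (hv : Sp v) :
    Sp (Fin.append x v) := by
  intro e
  obtain ⟨i, hi⟩ := hv e
  exact ⟨Fin.natAdd m i, by simpa using hi⟩

lemma Sp_appR {β κ : Type} {m l : ℕ} (x : Fin l → β ⊕ κ) {v : Fin m → β ⊕ κ} (hv : Sp v) :
    Sp (Fin.append v x) := by
  intro e
  obtain ⟨i, hi⟩ := hv e
  exact ⟨Fin.castAdd l i, by simpa using hi⟩

lemma sub_ev_lift {α : Type} {n d : ℕ} (a : α) (v : Fin n → α ⊕ Fin d) (x : Fin d → Option α) :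
    sub (ev (lift v) x) a = ev v (sub x a) := by
  funext i
  simp only [sub, ev, lift]
  cases v i <;> simp [sub]

/-- insensitive dense sets contain subspaces -/
lemma IS {α : Type} [Fintype α] [Nonempty α] (h : DHJ α) (a : α) (d : ℕ) (η : ℝ) (hη : 0 < η) :
    ∃ M : ℕ, ∀ E : Set (Fin M → Option α), Ins a E → η ≤ dens E →
      ∃ v : Fin M → Option α ⊕ Fin d, Sp v ∧ ∀ x, ev v x ∈ E := by
  by_contra hcon
  push Not at hcon
  obtain ⟨ρ, hρ, hU⟩ := UF (β := Option α) (fun n E => Ins a E ∧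
      ∀ v : Fin n → Option α ⊕ Fin d, Sp v → ∃ x, ev v x ∉ E) (by
    rintro m l A ⟨hA, hA'⟩ x
    refine ⟨hA.fib x, fun v hv => ?_⟩
    obtain ⟨z, hz⟩ := hA' (Fin.append (fun i => Sum.inl (x i)) v) (Sp_appL _ hv)
    rw [ev_appL] at hz
    exact ⟨z, hz⟩) η (by
    intro N
    obtain ⟨E, h1, h2, h3⟩ := hcon N
    exact ⟨N, le_rfl, E, ⟨h1, h3⟩, h2⟩)
  have hρ0 : 0 < ρ := hη.trans_le hρ
  obtain ⟨n0, hn0⟩ := MD h d (ρ / 2) (by positivity)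
  obtain ⟨l, E, ⟨hE, hE'⟩, hfib⟩ := (hU (ρ / 2) (by positivity)).2 n0
  have h1 : ρ / 2 ≤ av (fun x : Fin n0 → α => av (fun y : Fin l → Option α =>
      ind (Fin.append (fun i => some (x i)) y ∈ E))) := by
    apply le_av
    intro x
    have := hfib (fun i => some (x i))
    simp only [dens, Set.mem_ofPred_eq] at this
    linarith
  rw [av_comm] at h1
  obtain ⟨y, hy⟩ := exists_le_of_le_av h1
  obtain ⟨v, hv, hvA⟩ := hn0 {x | Fin.append (fun i => some (x i)) y ∈ E} hy
  obtain ⟨z, hz⟩ := hE' (Fin.append (lift v) (fun i => Sum.inl (y i))) (Sp_appR _ (lift_Sp hv))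
  apply hz
  rw [ev_appR]
  rw [hE _ (Fin.append (fun i => some (ev v (sub z a) i)) y)]
  · exact hvA (sub z a)
  · rw [sub_append, sub_append, sub_some, sub_ev_lift]

lemma av_range {X Z : Type} [Fintype X] [Fintype Z] [Nonempty Z] {φ : Z → X}
    (hφ : Function.Injective φ) (g : X → ℝ) :
    av (fun x => g x * ind (x ∈ Set.range φ)) = av (fun z => g (φ z)) * dens (Set.range φ) := by
  have key : ∀ g : X → ℝ, ∑ x, g x * ind (x ∈ Set.range φ) = ∑ z, g (φ z) := by
    intro g
    have : ∑ z, g (φ z) = ∑ x ∈ Finset.univ.image φ, g x := by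
      rw [Finset.sum_image]
      intro a _ b _ h
      exact hφ h
    rw [this, ← Finset.sum_filter_add_sum_filter_not Finset.univ (fun x => x ∈ Set.range φ)]
    rw [Finset.sum_congr rfl (g := fun x => g x)]
    · rw [Finset.sum_eq_zero (s := Finset.univ.filter fun x => ¬ x ∈ Set.range φ), add_zero]
      · apply Finset.sum_congr _ (fun _ _ => rfl)
        ext x; simp
      · intro x hx
        rw [ind_false (Finset.mem_filter.mp hx).2, mul_zero]
    · intro x hx
      rw [ind_true (Finset.mem_filter.mp hx).2, mul_one]
  have k1 := key (fun _ => 1)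
  simp only [one_mul] at k1
  have hZ : (Fintype.card Z : ℝ) ≠ 0 := by exact_mod_cast Fintype.card_ne_zero
  simp only [av, dens, key, k1]
  simp
  field_simp

end BES

namespace BES
open Finset
open scoped BigOperators Classical

lemma S0 {α : Type} [Fintype α] [Nonempty α] (h : DHJ α) (a : α) (d : ℕ) (η : ℝ) (hη : 0 < η) :
    ∃ M : ℕ, ∃ κ > 0, ∀ s : ℕ, ∀ n ≥ s * M, ∀ (J : Type) [Fintype J] [Nonempty J]
      (E : J → Set (Fin n → Option α)) (f : J → (Fin n → Option α) → ℝ),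
      (∀ j, Ins a (E j)) → (∀ j x, f j x ≤ 1) →
      (∀ j (v : Fin n → Option α ⊕ Fin d), Sp v → av (fun x => f j (ev v x)) ≤ η) →
      av (fun j => av (fun x => f j x * ind (x ∈ E j))) ≤
        η * av (fun j => dens (E j)) + max η (av (fun j => dens (E j)) - s * κ) := by
  obtain ⟨M, hM⟩ := IS h a d (η / 2) (by positivity)
  refine ⟨M, η / 2 / Fintype.card (Fin M → Option α), by positivity, ?_⟩
  intro s
  induction s with
  | zero =>
    intro n _ J _ _ E f hE hf hsub
    have h1 : av (fun j => av (fun x => f j x * ind (x ∈ E j))) ≤ av (fun j => dens (E j)) := by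
      apply av_le_av
      intro j
      apply av_le_av
      intro x
      have := mul_le_mul_of_nonneg_right (hf j x) (ind_nonneg (x ∈ E j))
      linarith
    have h2 : 0 ≤ av (fun j => dens (E j)) := av_nonneg fun j => dens_nonneg _
    have h3 := le_max_right η (av (fun j => dens (E j)) - (0:ℕ) * (η / 2 / Fintype.card (Fin M → Option α)))
    have h4 : 0 ≤ η * av (fun j => dens (E j)) := by positivity
    simp only [Nat.cast_zero, zero_mul, sub_zero] at h3 ⊢
    linarith
  | succ s ih =>
    intro n hn J _ _ E f hE hf hsub
    obtain ⟨n', rfl⟩ : ∃ n', n = M + n' := ⟨n - M, by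
      have : (s + 1) * M = s * M + M := by ring
      omega⟩
    have hn' : n' ≥ s * M := by
      have : (s + 1) * M = s * M + M := by ring
      omega
    -- the removed part
    have hR : ∀ U : Set (Fin M → Option α), ∃ R : Set (Fin M → Option α), Ins a U → R ⊆ U ∧
        (∀ g : (Fin M → Option α) → ℝ, (∀ v : Fin M → Option α ⊕ Fin d, Sp v → av (fun x => g (ev v x)) ≤ η) →
          av (fun x => g x * ind (x ∈ R)) ≤ η * dens R) ∧
        (1 / Fintype.card (Fin M → Option α)) * ind (η / 2 ≤ dens U) ≤ dens R := by
      intro U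
      by_cases hU : Ins a U ∧ η / 2 ≤ dens U
      · obtain ⟨v, hv, hvU⟩ := hM U hU.1 hU.2
        refine ⟨Set.range (ev v), fun _ => ⟨?_, ?_, ?_⟩⟩
        · rintro _ ⟨x, rfl⟩
          exact hvU x
        · intro g hg
          rw [av_range (ev_injective hv)]
          exact mul_le_mul_of_nonneg_right (hg v hv) (dens_nonneg _)
        · rw [ind_true hU.2, mul_one]
          have := single_le_av (f := fun x => ind (x ∈ Set.range (ev v))) (fun _ => ind_nonneg _)
            (ev v (fun _ => none))
          rw [ind_true ⟨_, rfl⟩] at this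
          exact this
      · refine ⟨∅, fun hI => ⟨Set.empty_subset _, ?_, ?_⟩⟩
        · intro g _
          have : dens (∅ : Set (Fin M → Option α)) = 0 := by simp [dens, ind, av]
          rw [this]
          simp [ind, av]
        · rw [ind_false (fun h => hU ⟨hI, h⟩), mul_zero]
          exact dens_nonneg _
    choose R hR using hR
    let U : J → (Fin n' → Option α) → Set (Fin M → Option α) := fun j y => {x | Fin.append x y ∈ E j}
    have hUI : ∀ j y, Ins a (U j y) := fun j y => (hE j).fib' y
    have hUeq : ∀ j y y', sub y a = sub y' a → U j y = U j y' := by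
      intro j y y' hy
      ext x
      exact (hE j).fib x y y' hy
    let E' : J × (Fin M → Option α) → Set (Fin n' → Option α) :=
      fun p => {y | p.2 ∈ U p.1 y ∧ p.2 ∉ R (U p.1 y)}
    let f' : J × (Fin M → Option α) → (Fin n' → Option α) → ℝ := fun p y => f p.1 (Fin.append p.2 y)
    have ih' := ih n' hn' (J × (Fin M → Option α)) E' f' (by
      intro p y y' hy
      simp only [E', Set.mem_ofPred_eq]
      rw [hUeq p.1 y y' hy]) (fun p y => hf _ _) (by
      intro p v hv
      have := hsub p.1 (Fin.append (fun i => Sum.inl (p.2 i)) v) (Sp_appL _ hv)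
      simpa only [ev_appL] using this)
    set e := av (fun j => dens (E j)) with he
    set r := av (fun j => av (fun y => dens (R (U j y)))) with hr
    have hindsplit : ∀ j x y, ind (Fin.append x y ∈ E j) = ind (x ∈ R (U j y)) + ind (y ∈ E' (j, x)) := by
      intro j x y
      have hsubset := (hR (U j y) (hUI j y)).1
      by_cases h1 : x ∈ R (U j y)
      · have h2 : Fin.append x y ∈ E j := hsubset h1
        rw [ind_true h1, ind_true h2, ind_false (fun h3 => h3.2 h1)]
        ring
      · by_cases h2 : Fin.append x y ∈ E j
        · rw [ind_false h1, ind_true h2, ind_true (show y ∈ E' (j, x) from ⟨h2, h1⟩)]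
          ring
        · rw [ind_false h1, ind_false h2, ind_false (fun h3 => h2 h3.1)]
          ring
    have he' : e = r + av (fun p => dens (E' p)) := by
      rw [he, hr, av_prod, ← av_add]
      congr 1
      funext j
      rw [dens_append]
      simp only [dens, Set.mem_ofPred_eq]
      rw [av_comm (fun y x => ind (x ∈ R (U j y))), ← av_add]
      congr 1
      funext x
      rw [← av_add]
      congr 1
      funext y
      exact hindsplit j x y
    have hmain : av (fun j => av (fun x => f j x * ind (x ∈ E j))) ≤
        η * r + av (fun p => av (fun y => f' p y * ind (y ∈ E' p))) := by
      rw [hr, av_prod, ← av_mul, ← av_add]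
      apply av_le_av
      intro j
      rw [av_append]
      have h1 : av (fun y => av (fun x => f j (Fin.append x y) * ind (x ∈ R (U j y)))) ≤
          η * av (fun y => dens (R (U j y))) := by
        rw [← av_mul]
        apply av_le_av
        intro y
        refine (hR (U j y) (hUI j y)).2.1 (fun x => f j (Fin.append x y)) ?_
        intro v hv
        have := hsub j (Fin.append v (fun i => Sum.inl (y i))) (Sp_appR _ hv)
        simpa only [ev_appR] using this
      rw [av_comm] at h1
      refine le_trans (le_of_eq ?_) (add_le_add_left h1 _)
      rw [← av_add]
      congr 1
      funext x
      rw [← av_add]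
      congr 1
      funext y
      rw [hindsplit j x y]
      simp only [f']
      ring
    have hrbig : η ≤ e → η / 2 / Fintype.card (Fin M → Option α) ≤ r := by
      intro hηe
      have h1 : e = av (fun p : J × (Fin n' → Option α) => dens (U p.1 p.2)) := by
        rw [he, av_prod]
        congr 1
        funext j
        rw [dens_append]
        simp only [dens, Set.mem_ofPred_eq]
        rw [av_comm]
        rfl
      have h2 := av_markov (f := fun p : J × (Fin n' → Option α) => dens (U p.1 p.2))
        (fun p => dens_le_one _) (hη.trans_le hηe) h1.le
      have h3 : r = av (fun p : J × (Fin n' → Option α) => dens (R (U p.1 p.2))) := by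
        rw [hr, av_prod]
      have h4 : (1 / (Fintype.card (Fin M → Option α) : ℝ)) * av (fun p : J × (Fin n' → Option α) => ind (e / 2 ≤ dens (U p.1 p.2))) ≤ r := by
        rw [h3, ← av_mul]
        apply av_le_av
        intro p
        refine le_trans ?_ (hR (U p.1 p.2) (hUI _ _)).2.2
        apply mul_le_mul_of_nonneg_left _ (by positivity)
        apply ind_mono
        intro h; linarith
      refine le_trans ?_ h4
      rw [div_eq_mul_inv, mul_comm, one_div]
      apply mul_le_mul_of_nonneg_left _ (by positivity)
      linarith
    have hr0 : 0 ≤ r := av_nonneg fun j => av_nonneg fun y => dens_nonneg _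
    have hκ : 0 < η / 2 / Fintype.card (Fin M → Option α) := by positivity
    set κ := η / 2 / (Fintype.card (Fin M → Option α) : ℝ)
    set e' := av (fun p => dens (E' p))
    have hfin : max η (e' - s * κ) ≤ max η (e - ((s + 1 : ℕ) : ℝ) * κ) := by
      by_cases hηe : η ≤ e
      · have := hrbig hηe
        apply max_le_max le_rfl
        push_cast
        linarith
      · have : 0 ≤ s * κ := by positivity
        apply max_le (le_max_left _ _)
        refine le_trans ?_ (le_max_left _ _)
        linarith
    have : η * e = η * r + η * e' := by rw [he']; ring
    linarith

lemma S1 {α : Type} [Fintype α] [Nonempty α] (h : DHJ α) (a : α) (d : ℕ) (η : ℝ) (hη : 0 < η) :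
    ∃ N : ℕ, ∀ n ≥ N, ∀ (E : Set (Fin n → Option α)) (f : (Fin n → Option α) → ℝ),
      Ins a E → (∀ x, f x ≤ 1) →
      (∀ (v : Fin n → Option α ⊕ Fin d), Sp v → av (fun x => f (ev v x)) ≤ η) →
      av (fun x => f x * ind (x ∈ E)) ≤ 2 * η := by
  obtain ⟨M, κ, hκ, hS⟩ := S0 h a d η hη
  obtain ⟨s, hs⟩ := exists_nat_ge (1 / κ)
  refine ⟨s * M, fun n hn E f hE hf hv => ?_⟩
  have := hS s n hn Unit (fun _ => E) (fun _ => f) (fun _ => hE) (fun _ => hf) (fun _ => hv)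
  simp only [av_const] at this
  have h1 := dens_le_one E
  have h2 : 1 ≤ s * κ := by rwa [div_le_iff₀ hκ] at hs
  have h3 : max η (dens E - s * κ) ≤ η := max_le le_rfl (by linarith)
  nlinarith

lemma INS {α : Type} [Fintype α] [Nonempty α] (h : DHJ α) (d : ℕ) (s : Finset α) : ∀ (η : ℝ), 0 < η →
    ∃ N : ℕ, ∀ n ≥ N, ∀ (E : α → Set (Fin n → Option α)) (f : (Fin n → Option α) → ℝ),
      (∀ a, Ins a (E a)) → (∀ x, f x ≤ 1) →
      (∀ (v : Fin n → Option α ⊕ Fin d), Sp v → av (fun x => f (ev v x)) ≤ 0) →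
      av (fun x => f x * ∏ a ∈ s, ind (x ∈ E a)) ≤ η := by
  induction s using Finset.induction_on with
  | empty =>
    intro η hη
    refine ⟨d, fun n hn E f hE hf hv => ?_⟩
    obtain ⟨k, rfl⟩ : ∃ k, n = k + d := ⟨n - d, by omega⟩
    simp only [Finset.prod_empty, mul_one]
    refine le_trans ?_ hη.le
    rw [av_append]
    apply av_le
    intro x
    have := hv (Fin.append (fun i => Sum.inl (x i)) Sum.inr) (Sp_appL _ (fun e => ⟨e, rfl⟩))
    simp only [ev_appL] at this
    exact this
  | insert a s ha ih =>
    intro η hη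
    obtain ⟨d', hd'⟩ := ih (η / 2) (by positivity)
    obtain ⟨N, hN⟩ := S1 h a d' (η / 2) (by positivity)
    refine ⟨N, fun n hn E f hE hf hv => ?_⟩
    have := hN n hn (E a) (fun x => f x * ∏ a ∈ s, ind (x ∈ E a)) (hE a) ?_ ?_
    · convert this using 1
      · congr 1
        funext x
        rw [Finset.prod_insert ha]
        ring
      · ring
    · intro x
      have h0 : 0 ≤ ∏ a ∈ s, ind (x ∈ E a) := Finset.prod_nonneg fun _ _ => ind_nonneg _
      have h1 : ∏ a ∈ s, ind (x ∈ E a) ≤ 1 := Finset.prod_le_one (fun _ _ => ind_nonneg _) (fun _ _ => ind_le_one _)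
      nlinarith [hf x]
    · intro v hvS
      refine hd' d' le_rfl (fun b => {x | ev v x ∈ E b}) (fun x => f (ev v x)) (fun b => (hE b).ev v)
        (fun x => hf _) ?_
      intro u hu
      have := hv (comp v u) (comp_Sp hvS hu)
      simpa only [ev_comp] using this

end BES

namespace BES
open Finset
open scoped BigOperators Classical

lemma dens_nonone {α : Type} [Fintype α] (ε : ℝ) (hε : 0 < ε) :
    ∃ M0 : ℕ, ∀ M ≥ M0, dens {x : Fin M → Option α | ∀ i, x i ≠ none} ≤ ε := by
  have hr : ((Fintype.card α : ℝ) / (Fintype.card α + 1)) < 1 := by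
    rw [div_lt_one (by positivity)]; linarith
  obtain ⟨M0, hM0⟩ := exists_pow_lt_of_lt_one hε hr
  refine ⟨M0, fun M hM => ?_⟩
  have h1 : dens {x : Fin M → Option α | ∀ i, x i ≠ none} ≤ ((Fintype.card α : ℝ) / (Fintype.card α + 1)) ^ M := by
    unfold dens av
    have h2 : ∑ x : Fin M → Option α, ind (x ∈ {x : Fin M → Option α | ∀ i, x i ≠ none}) ≤ (Fintype.card α : ℝ) ^ M := by
      have : ∑ x : Fin M → Option α, ind (x ∈ {x : Fin M → Option α | ∀ i, x i ≠ none}) =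
          ((Finset.univ.filter fun x : Fin M → Option α => ∀ i, x i ≠ none).card : ℝ) := by
        rw [Finset.card_filter]
        push_cast
        apply Finset.sum_congr rfl
        intro x _
        simp only [ind, Set.mem_ofPred_eq]
        split_ifs <;> rfl
      rw [this]
      have h3 : (Finset.univ.filter fun x : Fin M → Option α => ∀ i, x i ≠ none) ⊆
          Finset.univ.image (fun z : Fin M → α => fun i => some (z i)) := by
        intro x hx
        have hx := (Finset.mem_filter.mp hx).2
        choose z hz using fun i => Option.ne_none_iff_exists'.mp (hx i)
        exact Finset.mem_image.mpr ⟨z, Finset.mem_univ _, by funext i; rw [hz]⟩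
      have h4 := (Finset.card_le_card h3).trans Finset.card_image_le
      rw [Finset.card_univ, Fintype.card_fun, Fintype.card_fin] at h4
      exact_mod_cast h4
    rw [Fintype.card_fun, Fintype.card_fin, Fintype.card_option, div_pow]
    push_cast
    gcongr
  refine h1.trans (le_trans ?_ hM0.le)
  exact pow_le_pow_of_le_one (by positivity) hr.le hM

lemma prod_ind {α : Type} [Fintype α] (P : α → Prop) : ∏ a, ind (P a) = ind (∀ a, P a) := by
  by_cases h : ∀ a, P a
  · rw [ind_true h]
    exact Finset.prod_eq_one fun a _ => ind_true (h a)
  · rw [ind_false h]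
    push Not at h
    obtain ⟨a, ha⟩ := h
    exact Finset.prod_eq_zero (Finset.mem_univ a) (ind_false ha)

lemma split_ind {α X : Type} [Fintype α] (D : α → Set X) (x : X) :
    1 - ind (∀ a, x ∈ D a) = ∑ T ∈ (Finset.univ : Finset (Finset α)).erase Finset.univ,
      ∏ a, ind (x ∈ (if a ∈ T then D a else (D a)ᶜ)) := by
  have h1 : ∀ T : Finset α, ∏ a, ind (x ∈ (if a ∈ T then D a else (D a)ᶜ)) =
      ind (T = Finset.univ.filter fun a => x ∈ D a) := by
    intro T
    rw [prod_ind]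
    congr 1
    apply propext
    constructor
    · intro h
      ext a
      have := h a
      by_cases ha : a ∈ T
      · simp [ha] at this ⊢; exact this
      · simp [ha] at this ⊢; exact this
    · intro h a
      by_cases ha : a ∈ T
      · rw [if_pos ha]; rw [h] at ha; simpa using ha
      · rw [if_neg ha]; rw [h] at ha; simpa using ha
  have h2 : ∑ T : Finset α, ∏ a, ind (x ∈ (if a ∈ T then D a else (D a)ᶜ)) = 1 := by
    simp only [h1]
    rw [Finset.sum_eq_single (Finset.univ.filter fun a => x ∈ D a)]
    · exact ind_true rfl
    · intro T _ hT
      exact ind_false hT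
    · intro hT
      exact absurd (Finset.mem_univ _) hT
  rw [← h2, ← Finset.add_sum_erase _ _ (Finset.mem_univ Finset.univ)]
  have h3 : ∏ a, ind (x ∈ (if a ∈ (Finset.univ : Finset α) then D a else (D a)ᶜ)) = ind (∀ a, x ∈ D a) := by
    rw [prod_ind]; simp
  rw [h3]
  ring

lemma HasLine_ev {α : Type} {n d : ℕ} {A : Set (Fin n → α)} {v : Fin n → α ⊕ Fin d} (hv : Sp v)
    (h : HasLine {x | ev v x ∈ A}) : HasLine A := by
  obtain ⟨w, ⟨i, hi⟩, hw⟩ := h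
  obtain ⟨j, hj⟩ := hv i
  refine ⟨fun j => Sum.elim some w (v j), ⟨j, by simp [hj, hi]⟩, fun a => ?_⟩
  have := hw a
  simp only [Set.mem_ofPred_eq] at this
  convert this using 1
  funext j
  simp only [sub, ev]
  cases v j <;> simp [sub]

lemma HasLine_appL {α : Type} {m l : ℕ} {A : Set (Fin (m + l) → α)} {x : Fin m → α}
    (h : HasLine {y | Fin.append x y ∈ A}) : HasLine A := by
  obtain ⟨w, ⟨i, hi⟩, hw⟩ := h
  refine ⟨Fin.append (fun i => some (x i)) w, ⟨Fin.natAdd m i, by simpa using hi⟩, fun a => ?_⟩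
  rw [sub_append, sub_some]
  exact hw a

lemma HasLine_appR {α : Type} {m l : ℕ} {A : Set (Fin (m + l) → α)} {y : Fin l → α}
    (h : HasLine {x | Fin.append x y ∈ A}) : HasLine A := by
  obtain ⟨w, ⟨i, hi⟩, hw⟩ := h
  refine ⟨Fin.append w (fun i => some (y i)), ⟨Fin.castAdd l i, by simpa using hi⟩, fun a => ?_⟩
  rw [sub_append, sub_some]
  exact hw a

lemma ev_lift_some {α : Type} {n d : ℕ} (v : Fin n → α ⊕ Fin d) (z : Fin d → α) :
    ev (lift v) (fun i => some (z i)) = fun i => some (ev v z i) := by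
  funext i
  simp only [ev, lift]
  cases v i <;> simp

lemma step {α : Type} [Fintype α] [Nonempty α] (h : DHJ α) : DHJ (Option α) := by
  by_contra hcon
  unfold DHJ at hcon
  push Not at hcon
  obtain ⟨δ, hδ, hcon⟩ := hcon
  obtain ⟨ρ, hρ, hU⟩ := UF (β := Option α) (fun n A => ¬ HasLine A)
    (fun m l A hA x hx => hA (HasLine_appL hx)) δ (by
      intro N
      obtain ⟨n, hn, A, hA, hL⟩ := hcon N
      exact ⟨n, hn, A, hL, hA⟩)
  have hρ0 : 0 < ρ := hδ.trans_le hρ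
  obtain ⟨m1, θ, hθ, hPD⟩ := PD h (ρ / 2) (by positivity)
  have hρθ : 0 < ρ * θ := by positivity
  obtain ⟨d, hd⟩ := (hU (ρ * θ / 8) (by positivity)).1
  obtain ⟨N, hN⟩ := INS h d Finset.univ (ρ * θ / (8 * 2 ^ Fintype.card α)) (by positivity)
  obtain ⟨M0, hM0⟩ := dens_nonone (α := α) (min (1 / 2) (ρ * θ / 16)) (by positivity)
  have hMN : m1 + (N + M0) ≥ N := by omega
  have hMM : m1 + (N + M0) ≥ M0 := by omega
  generalize N + M0 = M' at hMN hMM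
  have hκ := hM0 _ hMM
  obtain ⟨m0, hGR⟩ := GR α (m1 + M')
  obtain ⟨l, A, hA, hfib⟩ := (hU (min (ρ * θ / 16) (ρ / 2)) (by positivity)).2 m0
  have hε1 := min_le_left (ρ * θ / 16) (ρ / 2)
  have hε2 := min_le_right (ρ * θ / 16) (ρ / 2)
  set ε := min (ρ * θ / 16) (ρ / 2)
  obtain ⟨v, hv, hvc⟩ := hGR (fun w => θ ≤ dens {y : Fin l → Option α | ∀ a, Fin.append (fun i => some (sub w a i)) y ∈ A})
  simp only [sub_ev_lift] at hvc
  have hcol : ∀ x : Fin (m1 + M') → Option α, (∃ i, x i = none) →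
      θ ≤ dens {y : Fin l → Option α | ∀ a, Fin.append (fun i => some (ev v (sub x a) i)) y ∈ A} := by
    obtain ⟨a0⟩ := ‹Nonempty α›
    obtain ⟨w, ⟨i, hi⟩, hw⟩ := hPD (Fin l → Option α)
      (fun x => {y | Fin.append (fun i => some (ev v (Fin.append x (fun _ => a0)) i)) y ∈ A}) (by
        apply le_av
        intro x
        have := hfib (fun i => some (ev v (Fin.append x (fun _ => a0)) i))
        linarith)
    intro x hx
    refine hvc (Fin.append w (fun _ => some a0)) x ⟨Fin.castAdd M' i, by simpa using hi⟩ hx ?_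
    have h2 : ∀ a, sub (Fin.append w (fun _ : Fin M' => some a0)) a = Fin.append (sub w a) (fun _ => a0) := by
      intro a
      rw [sub_append, sub_some]
    simp only [h2]
    exact hw
  let B : (Fin l → Option α) → Set (Fin (m1 + M') → Option α) := fun y => {x | Fin.append (ev (lift v) x) y ∈ A}
  have hB : ∀ y, ¬ HasLine (B y) := fun y hL =>
    hA (HasLine_appR (y := y) (HasLine_ev (lift_Sp hv) hL))
  let D : (Fin l → Option α) → α → Set (Fin (m1 + M') → Option α) := fun y a => {x | (fun i => some (sub x a i)) ∈ B y}
  have hDI : ∀ y a, Ins a (D y a) := by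
    intro y a x x' hx
    simp only [D, Set.mem_ofPred_eq, hx]
  have hcol' : ∀ x : Fin (m1 + M') → Option α, (∃ i, x i = none) →
      θ ≤ av (fun y => ind (∀ a, x ∈ D y a)) := by
    intro x hx
    have := hcol x hx
    simp only [D, B, Set.mem_ofPred_eq, ev_lift_some]
    exact this
  have hBD : ∀ x y, ind (x ∈ B y) * ind (∀ a, x ∈ D y a) ≤ ind (x ∈ {x : Fin (m1 + M') → Option α | ∀ i, x i ≠ none}) := by
    intro x y
    by_cases hx : ∀ i, x i ≠ none
    · rw [ind_true (show x ∈ {x : Fin (m1 + M') → Option α | ∀ i, x i ≠ none} from hx)]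
      have := ind_nonneg (x ∈ B y)
      have := ind_le_one (x ∈ B y)
      have := ind_nonneg (∀ a, x ∈ D y a)
      have := ind_le_one (∀ a, x ∈ D y a)
      nlinarith
    · refine le_trans (le_of_eq ?_) (ind_nonneg _)
      by_cases h1 : x ∈ B y
      · rw [ind_false (p := ∀ a, x ∈ D y a), mul_zero]
        intro h2
        push Not at hx
        obtain ⟨i, hi⟩ := hx
        apply hB y
        refine ⟨fun i => (x i).map some, ⟨i, by simp [hi]⟩, fun o => ?_⟩
        cases o with
        | none =>
          convert h1 using 1
          funext i
          simp only [sub]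
          cases x i <;> simp
        | some a =>
          have h3 : (fun i => some (sub x a i)) ∈ B y := h2 a
          convert h3 using 1
          funext i
          simp only [sub]
          cases x i <;> simp
      · rw [ind_false h1, zero_mul]
  have hQ : ρ * θ / 4 ≤ av (fun y => av (fun x => (ind (x ∈ B y) - (ρ + ρ * θ / 8)) * (1 - ind (∀ a, x ∈ D y a)))) := by
    rw [av_comm]
    have hx : ∀ x, (ρ - ε) - ind (x ∈ {x : Fin (m1 + M') → Option α | ∀ i, x i ≠ none}) - (ρ + ρ * θ / 8)
        + (ρ + ρ * θ / 8) * (θ * (1 - ind (x ∈ {x : Fin (m1 + M') → Option α | ∀ i, x i ≠ none}))) ≤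
        av (fun y => (ind (x ∈ B y) - (ρ + ρ * θ / 8)) * (1 - ind (∀ a, x ∈ D y a))) := by
      intro x
      have e1 : av (fun y => (ind (x ∈ B y) - (ρ + ρ * θ / 8)) * (1 - ind (∀ a, x ∈ D y a))) =
          av (fun y => ind (x ∈ B y)) - av (fun y => ind (x ∈ B y) * ind (∀ a, x ∈ D y a)) - (ρ + ρ * θ / 8)
            + (ρ + ρ * θ / 8) * av (fun y => ind (∀ a, x ∈ D y a)) := by
        rw [← av_mul, ← av_sub, ← av_const (X := Fin l → Option α) (ρ + ρ * θ / 8), ← av_sub, ← av_add]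
        congr 1
        funext y
        rw [av_const]
        ring
      rw [e1]
      have e2 : ρ - ε ≤ av (fun y => ind (x ∈ B y)) := hfib (ev (lift v) x)
      have e3 : av (fun y => ind (x ∈ B y) * ind (∀ a, x ∈ D y a)) ≤ ind (x ∈ {x : Fin (m1 + M') → Option α | ∀ i, x i ≠ none}) :=
        av_le fun y => hBD x y
      have e4 : θ * (1 - ind (x ∈ {x : Fin (m1 + M') → Option α | ∀ i, x i ≠ none})) ≤ av (fun y => ind (∀ a, x ∈ D y a)) := by
        by_cases hx : ∀ i, x i ≠ none
        · rw [ind_true (show x ∈ {x : Fin (m1 + M') → Option α | ∀ i, x i ≠ none} from hx)]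
          have : 0 ≤ av (fun y => ind (∀ a, x ∈ D y a)) := av_nonneg fun y => ind_nonneg _
          linarith
        · rw [ind_false (show ¬ x ∈ {x : Fin (m1 + M') → Option α | ∀ i, x i ≠ none} from hx)]
          push Not at hx
          have := hcol' x hx
          linarith
      have e5 := mul_le_mul_of_nonneg_left e4 (show 0 ≤ ρ + ρ * θ / 8 by positivity)
      linarith
    refine le_trans ?_ (av_le_av hx)
    set κ := dens {x : Fin (m1 + M') → Option α | ∀ i, x i ≠ none} with hκdef
    have e6 : av (fun x => (ρ - ε) - ind (x ∈ {x : Fin (m1 + M') → Option α | ∀ i, x i ≠ none}) - (ρ + ρ * θ / 8)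
        + (ρ + ρ * θ / 8) * (θ * (1 - ind (x ∈ {x : Fin (m1 + M') → Option α | ∀ i, x i ≠ none})))) =
        (ρ - ε) - κ - (ρ + ρ * θ / 8) + (ρ + ρ * θ / 8) * (θ * (1 - κ)) := by
      rw [av_add, av_sub, av_sub, av_const, av_const, av_mul, av_mul, av_sub, av_const]
      rfl
    rw [e6]
    have k1 := hκ.trans (min_le_left _ _)
    have k2 := hκ.trans (min_le_right _ _)
    have k3 : θ * (1 / 2) ≤ θ * (1 - κ) := mul_le_mul_of_nonneg_left (by linarith) hθ.le
    have k4 : ρ * (θ * (1 / 2)) ≤ (ρ + ρ * θ / 8) * (θ * (1 - κ)) :=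
      mul_le_mul (by linarith) k3 (by positivity) (by positivity)
    linarith
  obtain ⟨y, hy⟩ := exists_le_of_le_av hQ
  have hup : av (fun x => (ind (x ∈ B y) - (ρ + ρ * θ / 8)) * (1 - ind (∀ a, x ∈ D y a))) ≤ ρ * θ / 8 := by
    simp only [split_ind, Finset.mul_sum]
    rw [av_sum]
    have hT : ∀ T ∈ (Finset.univ : Finset (Finset α)).erase Finset.univ,
        av (fun x => (ind (x ∈ B y) - (ρ + ρ * θ / 8)) * ∏ a, ind (x ∈ (if a ∈ T then D y a else (D y a)ᶜ))) ≤
          ρ * θ / (8 * 2 ^ Fintype.card α) := by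
      intro T _
      refine hN _ hMN (fun a => if a ∈ T then D y a else (D y a)ᶜ) (fun x => ind (x ∈ B y) - (ρ + ρ * θ / 8)) ?_ ?_ ?_
      · intro a
        by_cases ha : a ∈ T
        · simp only [if_pos ha]; exact hDI y a
        · simp only [if_neg ha]
          intro x x' hx
          exact not_congr (hDI y a x x' hx)
      · intro x
        have := ind_le_one (x ∈ B y)
        linarith
      · intro u hu
        rw [av_sub, av_const]
        have := hd d le_rfl {x | ev u x ∈ B y} (fun hL => hB y (HasLine_ev hu hL))
        simp only [dens, Set.mem_ofPred_eq] at this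
        linarith
    refine (Finset.sum_le_card_nsmul _ _ _ hT).trans ?_
    rw [nsmul_eq_mul]
    have hc : (((Finset.univ : Finset (Finset α)).erase Finset.univ).card : ℝ) ≤ 2 ^ Fintype.card α := by
      have := Finset.card_le_card (Finset.erase_subset (Finset.univ : Finset α) Finset.univ)
      rw [Finset.card_univ, Fintype.card_finset] at this
      exact_mod_cast this
    calc _ ≤ (2 ^ Fintype.card α : ℝ) * (ρ * θ / (8 * 2 ^ Fintype.card α)) :=
          mul_le_mul_of_nonneg_right hc (by positivity)
      _ = ρ * θ / 8 := by field_simp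
  linarith

lemma DHJ_unit : DHJ Unit := by
  intro δ hδ
  refine ⟨1, fun n hn A hA => ?_⟩
  obtain ⟨y, hy⟩ := exists_le_of_le_av hA
  have := ind_pos (hδ.trans_le hy)
  refine ⟨fun _ => none, ⟨⟨0, hn⟩, rfl⟩, fun a => ?_⟩
  convert this using 1

lemma DHJ_equiv {α β : Type} [Fintype α] [Fintype β] (e : α ≃ β) (h : DHJ α) : DHJ β := by
  intro δ hδ
  obtain ⟨N, hN⟩ := h δ hδ
  refine ⟨N, fun n hn A hA => ?_⟩
  obtain ⟨w, ⟨i, hi⟩, hw⟩ := hN n hn {x | (fun i => e (x i)) ∈ A} (by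
    refine hA.trans (le_of_eq ?_)
    unfold dens
    rw [av_equiv (Equiv.piCongrRight (fun _ : Fin n => e))]
    rfl)
  refine ⟨fun i => (w i).map e, ⟨i, by simp [hi]⟩, fun b => ?_⟩
  have h3 : (fun i => e (sub w (e.symm b) i)) ∈ A := hw (e.symm b)
  convert h3 using 1
  funext i
  simp only [sub]
  cases w i <;> simp

lemma DHJ_fin (n : ℕ) : DHJ (Fin (n + 1)) := by
  induction n with
  | zero => exact DHJ_equiv (Equiv.ofUnique Unit (Fin 1)) DHJ_unit
  | succ n ih => exact DHJ_equiv (finSuccEquiv (n + 1)).symm (step ih)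

lemma DHJ_all (α : Type) [Fintype α] [Nonempty α] : DHJ α := by
  have h := DHJ_fin (Fintype.card α - 1)
  have : Fintype.card α - 1 + 1 = Fintype.card α := Nat.sub_add_cancel Fintype.card_pos
  exact DHJ_equiv ((finCongr this).trans (Fintype.equivFin α).symm) h

end BES

namespace BES
open Finset
open scoped BigOperators Classical

noncomputable def fc {G : Type} [Group G] [Fintype G] (H : Subgroup G) : ℕ := (Finset.univ.filter fun x => x ∈ H).card

lemma fc_eq {G : Type} [Group G] [Fintype G] (H : Subgroup G) : Nat.card H = fc H := by
  unfold fc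
  rw [Nat.card_eq_fintype_card, Fintype.card_subtype]

def Ab {G : Type} [Group G] (H : Subgroup G) : Prop := ∀ x ∈ H, ∀ y ∈ H, x * y = y * x

lemma pstep {P : Type} [Group P] [Fintype P] {p : ℕ} [Fact p.Prime] (hP : IsPGroup p P)
    (A K : Subgroup P) (hAK : A ≤ K) (hc : ∀ a ∈ A, ∀ k ∈ K, a * k = k * a) (hlt : fc A < fc K) :
    ∃ A' K' : Subgroup P, A' ≤ K' ∧ (∀ a ∈ A', ∀ k ∈ K', a * k = k * a) ∧ fc A < fc A' ∧
      fc K ≤ fc K' * fc A := by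
  have hN : (A.subgroupOf K).Normal := by
    constructor
    intro n hn g
    rw [Subgroup.mem_subgroupOf] at hn ⊢
    have h1 := hc n hn g g.2
    have : ((g * n * g⁻¹ : K) : P) = n := by
      push_cast
      rw [← h1]; group
    rw [this]; exact hn
  have hQ : IsPGroup p (K ⧸ A.subgroupOf K) := (hP.to_subgroup K).to_quotient _
  have hex : ∃ k ∈ K, k ∉ A := by
    by_contra hcon
    push Not at hcon
    have : fc K ≤ fc A := by
      apply Finset.card_le_card
      intro x hx
      simp only [Finset.mem_filter, Finset.mem_univ, true_and] at hx ⊢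
      exact hcon x hx
    omega
  have : Nontrivial (K ⧸ A.subgroupOf K) := by
    obtain ⟨k, hk, hkA⟩ := hex
    refine ⟨⟨((⟨k, hk⟩ : K) : K ⧸ A.subgroupOf K), 1, ?_⟩⟩
    rw [Ne, QuotientGroup.eq_one_iff, Subgroup.mem_subgroupOf]
    exact hkA
  have := hQ.center_nontrivial
  obtain ⟨⟨z, hz⟩, hz1⟩ := exists_ne (1 : Subgroup.center (K ⧸ A.subgroupOf K))
  obtain ⟨x, rfl⟩ := QuotientGroup.mk_surjective z
  have hxA : (x : P) ∉ A := by
    intro h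
    apply hz1
    apply Subtype.ext
    exact (QuotientGroup.eq_one_iff x).mpr (Subgroup.mem_subgroupOf.mpr h)
  have hxc : ∀ k ∈ K, k * x * k⁻¹ * (x : P)⁻¹ ∈ A := by
    intro k hk
    have h1 := Subgroup.mem_center_iff.mp hz ((⟨k, hk⟩ : K) : K ⧸ A.subgroupOf K)
    have h2 : (((⟨k, hk⟩ : K) * x * (⟨k, hk⟩ : K)⁻¹ * x⁻¹ : K) : K ⧸ A.subgroupOf K) = 1 := by
      show ((⟨k, hk⟩ : K) : K ⧸ A.subgroupOf K) * (x : K ⧸ A.subgroupOf K) * ((⟨k, hk⟩ : K) : K ⧸ A.subgroupOf K)⁻¹ * (x : K ⧸ A.subgroupOf K)⁻¹ = 1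
      rw [h1]; group
    have h3 := Subgroup.mem_subgroupOf.mp ((QuotientGroup.eq_one_iff _).mp h2)
    simpa using h3
  have hxA' : ∀ a ∈ A, a * x = x * a := fun a ha => hc a ha x x.2
  refine ⟨Subgroup.closure (A ∪ {(x : P)}), K ⊓ Subgroup.centralizer {(x : P)}, ?_, ?_, ?_, ?_⟩
  · rw [Subgroup.closure_le]
    rintro y (hy | rfl)
    · exact ⟨hAK hy, by
        apply Subgroup.mem_centralizer_singleton_iff.mpr
        first | exact hxA' y hy | exact (hxA' y hy).symm⟩
    · exact ⟨x.2, Subgroup.mem_centralizer_singleton_iff.mpr rfl⟩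
  · intro a ha k hk
    have hle : Subgroup.closure (A ∪ {(x : P)}) ≤ Subgroup.centralizer {k} := by
      rw [Subgroup.closure_le]
      rintro y (hy | rfl)
      · rw [SetLike.mem_coe, Subgroup.mem_centralizer_singleton_iff]
        first | exact hc y hy k hk.1 | exact (hc y hy k hk.1).symm
      · rw [SetLike.mem_coe, Subgroup.mem_centralizer_singleton_iff]
        have := Subgroup.mem_centralizer_singleton_iff.mp hk.2
        first | exact this | exact this.symm
    have := Subgroup.mem_centralizer_singleton_iff.mp (hle ha)
    first | exact this | exact this.symm
  · apply Finset.card_lt_card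
    rw [Finset.ssubset_iff_of_subset]
    · exact ⟨x, Finset.mem_filter.mpr ⟨Finset.mem_univ _, Subgroup.subset_closure (Or.inr rfl)⟩, by simpa using hxA⟩
    · intro y hy
      simp only [Finset.mem_filter, Finset.mem_univ, true_and] at hy ⊢
      exact Subgroup.subset_closure (Or.inl hy)
  · refine Finset.card_le_mul_card_image_of_maps_to (f := fun k => k * x * k⁻¹ * (x : P)⁻¹) ?_ _ ?_
    · intro k hk
      simp only [Finset.mem_filter, Finset.mem_univ, true_and] at hk ⊢
      exact hxc k hk
    · intro b _
      rcases Finset.eq_empty_or_nonempty (Finset.filter (fun k => k * x * k⁻¹ * (x : P)⁻¹ = b) (Finset.univ.filter fun k => k ∈ K)) with he | ⟨k0, hk0⟩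
      · rw [he]; simp
      · simp only [Finset.mem_filter, Finset.mem_univ, true_and] at hk0
        apply Finset.card_le_card_of_injOn (fun k => k0⁻¹ * k)
        · intro k hk
          simp only [Finset.coe_filter, Finset.mem_filter, Finset.mem_univ, true_and, Set.mem_ofPred_eq] at hk ⊢
          refine ⟨K.mul_mem (K.inv_mem hk0.1) hk.1, ?_⟩
          apply Subgroup.mem_centralizer_singleton_iff.mpr
          have h1 : k * x * k⁻¹ = k0 * x * k0⁻¹ := by
            have := hk.2.trans hk0.2.symm
            exact mul_right_cancel this
          have h2 : k * x = k0 * x * k0⁻¹ * k := by rw [← h1]; group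
          have h3 : k0⁻¹ * k * x = x * (k0⁻¹ * k) := by
            rw [mul_assoc, h2]; group
          first | exact h3 | exact h3.symm
        · intro k _ k' _ h
          exact mul_left_cancel h

lemma pgroup_ab (M : ℕ) {P : Type} [Group P] [Fintype P] {p : ℕ} [Fact p.Prime] (hP : IsPGroup p P)
    (hcard : M ^ M * M < Fintype.card P) : ∃ H : Subgroup P, Ab H ∧ M ≤ fc H := by
  by_contra hcon
  push Not at hcon
  have key : ∀ j, j ≤ M → ∃ A K : Subgroup P, A ≤ K ∧ (∀ a ∈ A, ∀ k ∈ K, a * k = k * a) ∧ j ≤ fc A ∧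
      Fintype.card P ≤ M ^ j * fc K := by
    intro j
    induction j with
    | zero =>
      intro _
      refine ⟨⊥, ⊤, bot_le, ?_, by simp, by simp [fc]⟩
      intro a ha k _
      rw [Subgroup.mem_bot.mp ha]; simp
    | succ j ih =>
      intro hj
      obtain ⟨A, K, hAK, hc, hA, hK⟩ := ih (by omega)
      have hAM := hcon A (fun x hx y hy => hc x hx y (hAK hy))
      have hlt : fc A < fc K := by
        by_contra hle
        have h1 : M ^ j * fc K ≤ M ^ M * M := by
          apply Nat.mul_le_mul
          · exact Nat.pow_le_pow_right (by omega) (by omega)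
          · omega
        omega
      obtain ⟨A', K', h1, h2, h3, h4⟩ := pstep hP A K hAK hc hlt
      refine ⟨A', K', h1, h2, by omega, hK.trans ?_⟩
      calc M ^ j * fc K ≤ M ^ j * (fc K' * M) := by
            apply Nat.mul_le_mul_left
            exact h4.trans (Nat.mul_le_mul_left _ hAM.le)
        _ = M ^ (j + 1) * fc K' := by ring
  obtain ⟨A, K, hAK, hc, hA, hK⟩ := key M le_rfl
  have := hcon A (fun x hx y hy => hc x hx y (hAK hy))
  omega

lemma big_ab (M : ℕ) : ∃ N : ℕ, ∀ (G : Type) [Group G] [Fintype G], N < Fintype.card G →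
    ∃ H : Subgroup G, Ab H ∧ M ≤ fc H := by
  refine ⟨(M ^ M * M + 1) ^ M, fun G _ _ hG => ?_⟩
  by_contra hcon
  push Not at hcon
  have hprime : ∀ p ∈ (Fintype.card G).primeFactors, p < M := by
    intro p hp
    have hpp := Nat.prime_of_mem_primeFactors hp
    have : Fact p.Prime := ⟨hpp⟩
    obtain ⟨x, hx⟩ := exists_prime_orderOf_dvd_card p (Nat.dvd_of_mem_primeFactors hp)
    have := hcon (Subgroup.zpowers x) (by
      rintro _ ⟨a, rfl⟩ _ ⟨b, rfl⟩
      exact (Commute.zpow_zpow_self x a b))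
    rwa [← fc_eq, Nat.card_zpowers, hx] at this
  have hpow : ∀ p ∈ (Fintype.card G).primeFactors, p ^ (Fintype.card G).factorization p ≤ M ^ M * M + 1 := by
    intro p hp
    have hpp := Nat.prime_of_mem_primeFactors hp
    have : Fact p.Prime := ⟨hpp⟩
    by_contra hlt
    push Not at hlt
    obtain ⟨K, hK⟩ := Sylow.exists_subgroup_card_pow_prime (G := G) p
      (n := (Fintype.card G).factorization p) (by rw [Nat.card_eq_fintype_card]; exact Nat.ordProj_dvd _ _)
    obtain ⟨H, hH, hHM⟩ := pgroup_ab M (P := K) (p := p) (IsPGroup.of_card hK) (by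
      rw [← Nat.card_eq_fintype_card, hK]; omega)
    have := hcon (H.map K.subtype) (by
      rintro _ ⟨x, hx, rfl⟩ _ ⟨y, hy, rfl⟩
      have := hH x hx y hy
      exact congrArg K.subtype this)
    rw [← fc_eq, Subgroup.card_map_of_injective K.subtype_injective, fc_eq] at this
    omega
  have h1 : Fintype.card G = ∏ p ∈ (Fintype.card G).primeFactors, p ^ (Fintype.card G).factorization p :=
    (Nat.prod_factorization_pow_eq_self Fintype.card_ne_zero).symm
  have h2 := Finset.prod_le_pow_card _ _ _ hpow
  rw [← h1] at h2
  have h3 : (Fintype.card G).primeFactors.card ≤ M := by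
    have : (Fintype.card G).primeFactors ⊆ Finset.range M := fun p hp => Finset.mem_range.mpr (hprime p hp)
    simpa using Finset.card_le_card this
  have h4 := Nat.pow_le_pow_right (n := M ^ M * M + 1) (by omega) h3
  omega

end BES

namespace BES
open Finset
open scoped BigOperators Classical

def SInj {H : Type} [CommGroup H] {n : ℕ} (d : Fin n → H) : Prop :=
  ∀ u u' : Fin n → Fin 2, ∏ i, d i ^ (u i : ℕ) = ∏ i, d i ^ (u' i : ℕ) → u = u'

lemma exists_SInj {H : Type} [CommGroup H] [Fintype H] (n : ℕ) (h : 4 ^ n < Fintype.card H) :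
    ∃ d : Fin n → H, SInj d := by
  induction n with
  | zero => exact ⟨fun i => i.elim0, fun u u' _ => Subsingleton.elim _ _⟩
  | succ n ih =>
    have h4 : 4 ^ n < Fintype.card H := lt_of_le_of_lt (Nat.pow_le_pow_right (by norm_num) (by omega)) h
    obtain ⟨d, hd⟩ := ih h4
    obtain ⟨z, hz⟩ : ∃ z : H, ∀ u u' : Fin n → Fin 2,
        z * ∏ i, d i ^ (u i : ℕ) ≠ ∏ i, d i ^ (u' i : ℕ) := by
      by_contra hcon
      push Not at hcon
      have hs : Function.Surjective (fun p : (Fin n → Fin 2) × (Fin n → Fin 2) =>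
          (∏ i, d i ^ (p.2 i : ℕ)) * (∏ i, d i ^ (p.1 i : ℕ))⁻¹) := by
        intro z
        obtain ⟨u, u', hu⟩ := hcon z
        exact ⟨(u, u'), by simp [← hu]⟩
      have := Fintype.card_le_of_surjective _ hs
      simp only [Fintype.card_prod, Fintype.card_fun, Fintype.card_fin] at this
      rw [← mul_pow] at this
      norm_num at this
      omega
    refine ⟨Fin.cons z d, fun u u' huu => ?_⟩
    rw [Fin.prod_univ_succ, Fin.prod_univ_succ] at huu
    simp only [Fin.cons_zero, Fin.cons_succ] at huu
    have h0 : u 0 = u' 0 := by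
      rcases Fin.exists_fin_two.mp ⟨u 0, rfl⟩ with h0 | h0 <;>
      rcases Fin.exists_fin_two.mp ⟨u' 0, rfl⟩ with h1 | h1
      · rw [h0, h1]
      · rw [h0, h1] at huu
        simp at huu
        exact absurd huu.symm (hz _ _)
      · rw [h0, h1] at huu
        simp at huu
        exact absurd huu (hz _ _)
      · rw [h0, h1]
    rw [h0] at huu
    have := hd (fun i => u i.succ) (fun i => u' i.succ) (mul_left_cancel huu)
    funext i
    refine Fin.cases h0 (fun i => ?_) i
    exact congrFun this i

noncomputable def blk {H L : Type} [CommGroup H] {n s : ℕ} (d : Fin n → H) (v : Fin n → L ⊕ Fin s) (j : Fin s) : H :=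
  ∏ i, if v i = Sum.inr j then d i else 1

lemma evprod {H L : Type} [CommGroup H] {n s : ℕ} (d : Fin n → H) (v : Fin n → L ⊕ Fin s) (e : L → ℕ)
    (x : Fin s → L) : ∏ i, d i ^ e (ev v x i) =
      (∏ i, Sum.elim (fun l => d i ^ e l) (fun _ => 1) (v i)) * ∏ j, blk d v j ^ e (x j) := by
  simp only [blk, ← Finset.prod_pow]
  rw [Finset.prod_comm, ← Finset.prod_mul_distrib]
  apply Finset.prod_congr rfl
  intro i _
  rcases hv : v i with l | j
  · simp [ev, hv]
  · simp only [ev, hv, Sum.elim_inr, one_mul, Sum.inr.injEq, ite_pow, one_pow]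
    rw [Finset.prod_ite_eq]
    simp

lemma blk_SInj {H L : Type} [CommGroup H] {n s : ℕ} {d : Fin n → H} (hd : SInj d)
    {v : Fin n → L ⊕ Fin s} (hv : Sp v) : SInj (blk d v) := by
  let v' : Fin n → Fin 2 ⊕ Fin s := fun i => Sum.map (fun _ => 0) id (v i)
  have hv' : Sp v' := by
    intro e
    obtain ⟨i, hi⟩ := hv e
    exact ⟨i, by simp [v', hi]⟩
  have hb : ∀ j, blk d v' j = blk d v j := by
    intro j
    unfold blk
    apply Finset.prod_congr rfl
    intro i _
    have : v' i = Sum.inr j ↔ v i = Sum.inr j := by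
      simp only [v']
      cases v i <;> simp
    simp only [this]
  intro u u' huu
  have h1 := evprod d v' Fin.val u
  have h2 := evprod d v' Fin.val u'
  simp only [hb] at h1 h2
  rw [huu, ← h2] at h1
  exact ev_injective hv' (hd _ _ h1)

lemma greedy {H : Type} [CommGroup H] (D : H) (X : Finset H) (hX : ∀ x ∈ X, x * D ∈ X) (i : ℕ)
    (hi : i + 1 ≤ X.card) : ∃ W W' : Finset H, W ⊆ W' ∧ W' ⊆ X ∧ W.card = i ∧ W'.card = i + 1 ∧
      ∀ w ∈ W, w * D ∈ W' := by
  induction i with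
  | zero =>
    obtain ⟨x, hx⟩ : X.Nonempty := Finset.card_pos.mp (by omega)
    exact ⟨∅, {x}, by simp, by simpa using hx, by simp, by simp, by simp⟩
  | succ i ih =>
    obtain ⟨W, W', h1, h2, h3, h4, h5⟩ := ih (by omega)
    have hz1 : (W' \ W).card = 1 := by
      rw [Finset.card_sdiff_of_subset h1]; omega
    obtain ⟨z, hz⟩ := Finset.card_eq_one.mp hz1
    have hzW : z ∈ W' := by
      have : z ∈ W' \ W := by rw [hz]; simp
      exact (Finset.mem_sdiff.mp this).1
    obtain ⟨t, ht, htX, hzt⟩ : ∃ t, t ∉ W' ∧ t ∈ X ∧ z * D ∈ insert t W' := by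
      by_cases hm : z * D ∈ W'
      · obtain ⟨t, ht, ht'⟩ := Finset.exists_of_ssubset (Finset.ssubset_iff_subset_ne.mpr
          ⟨h2, fun h => by rw [h] at h4; omega⟩)
        exact ⟨t, ht', ht, Finset.mem_insert_of_mem hm⟩
      · exact ⟨z * D, hm, hX z (h2 hzW), Finset.mem_insert_self _ _⟩
    refine ⟨W', insert t W', Finset.subset_insert _ _, Finset.insert_subset htX h2, h4, ?_, ?_⟩
    · rw [Finset.card_insert_of_notMem ht, h4]
    · intro w hw
      by_cases hwW : w ∈ W
      · exact Finset.mem_insert_of_mem (h5 w hwW)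
      · have : w ∈ W' \ W := Finset.mem_sdiff.mpr ⟨hw, hwW⟩
        rw [hz, Finset.mem_singleton] at this
        rw [this]; exact hzt

lemma findW {H : Type} [CommGroup H] (i : ℕ) (D : Fin (i + 1) → H) (hD : SInj D) :
    ∃ W W' : Finset H, W ⊆ W' ∧ W.card = i ∧ W'.card = i + 1 ∧ (∀ w ∈ W, w * D 0 ∈ W') ∧
      ∀ w ∈ W', ∃ a : Fin (i + 1) → Fin (i + 2), w = ∏ j, D j ^ (a j : ℕ) := by
  by_cases ho : orderOf (D 0) ≤ i ∧ 0 < orderOf (D 0)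
  · let X : Finset H := Finset.univ.image (fun a : Fin (i + 1) → Fin (i + 2) => ∏ j, D j ^ (a j : ℕ))
    obtain ⟨W, W', h1, h2, h3, h4, h5⟩ := greedy (D 0) X (by
      intro x hx
      obtain ⟨a, -, rfl⟩ := Finset.mem_image.mp hx
      refine Finset.mem_image.mpr ⟨Fin.cons ⟨((a 0 : ℕ) + 1) % orderOf (D 0), ?_⟩ (fun j => a j.succ), Finset.mem_univ _, ?_⟩
      · have := Nat.mod_lt ((a 0 : ℕ) + 1) ho.2
        omega
      · rw [Fin.prod_univ_succ, Fin.prod_univ_succ]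
        simp only [Fin.cons_zero, Fin.cons_succ, pow_mod_orderOf]
        rw [pow_succ, mul_right_comm]) i (by
      have hinj : Function.Injective (fun u : Fin (i + 1) → Fin 2 => ∏ j, D j ^ (u j : ℕ)) := fun u u' h => hD u u' h
      have hsub : Finset.univ.image (fun u : Fin (i + 1) → Fin 2 => ∏ j, D j ^ (u j : ℕ)) ⊆ X := by
        intro x hx
        obtain ⟨u, -, rfl⟩ := Finset.mem_image.mp hx
        exact Finset.mem_image.mpr ⟨fun j => ⟨u j, by have := (u j).2; omega⟩, Finset.mem_univ _, rfl⟩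
      have := Finset.card_le_card hsub
      rw [Finset.card_image_of_injective _ hinj, Finset.card_univ, Fintype.card_fun, Fintype.card_fin, Fintype.card_fin] at this
      have h2 := Nat.lt_two_pow_self (n := i + 1)
      omega)
    refine ⟨W, W', h1, h3, h4, h5, fun w hw => ?_⟩
    obtain ⟨a, -, rfl⟩ := Finset.mem_image.mp (h2 hw)
    exact ⟨a, rfl⟩
  · have hinj : Set.InjOn (fun j : ℕ => D 0 ^ j) (Finset.range (i + 1)) := by
      intro j hj k hk hjk
      simp only [Finset.coe_range, Set.mem_Iio] at hj hk
      by_cases h0 : orderOf (D 0) = 0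
      · exact injective_pow_iff_not_isOfFinOrder.mpr (orderOf_eq_zero_iff.mp h0) hjk
      · exact pow_injOn_Iio_orderOf (by simp only [Set.mem_Iio]; omega) (by simp only [Set.mem_Iio]; omega) hjk
    refine ⟨(Finset.range i).image (fun j => D 0 ^ j), (Finset.range (i + 1)).image (fun j => D 0 ^ j), ?_, ?_, ?_, ?_, ?_⟩
    · exact Finset.image_subset_image (Finset.range_subset_range.mpr (by omega))
    · rw [Finset.card_image_of_injOn, Finset.card_range]
      apply hinj.mono
      intro j hj
      simp at hj ⊢; omega
    · rw [Finset.card_image_of_injOn hinj, Finset.card_range]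
    · intro w hw
      obtain ⟨j, hj, rfl⟩ := Finset.mem_image.mp hw
      exact Finset.mem_image.mpr ⟨j + 1, by simp at hj ⊢; omega, pow_succ _ _⟩
    · intro w hw
      obtain ⟨j, hj, rfl⟩ := Finset.mem_image.mp hw
      refine ⟨Fin.cons ⟨j, by simp at hj; omega⟩ (fun _ => 0), ?_⟩
      rw [Fin.prod_univ_succ]
      simp

/-- the structure in the group -/
lemma struct (i : ℕ) (c : ℝ) (hc : 0 < c) : ∃ M : ℕ, ∀ (G : Type) [Group G] [Fintype G]
    (H : Type) [CommGroup H] [Fintype H] (f : H →* G), M < Fintype.card H →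
    ∀ S : Finset (G × G), c * (Fintype.card G : ℝ) ^ 2 ≤ S.card →
    ∃ (g g' : G) (D : H) (W W' : Finset H), D ≠ 1 ∧ W ⊆ W' ∧ W.card = i ∧ W'.card = i + 1 ∧
      (∀ w ∈ W, w * D ∈ W') ∧ ∀ w ∈ W', (g * f w, g') ∈ S ∧ (g * f w, f D * g') ∈ S := by
  obtain ⟨n, hn⟩ := MD (DHJ_all (Fin (i + 2) × Fin 2)) (i + 1) c hc
  refine ⟨4 ^ n, fun G _ _ H _ _ f hH S hS => ?_⟩
  obtain ⟨d, hd⟩ := exists_SInj n hH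
  have hav : ∀ w : Fin n → Fin (i + 2) × Fin 2, c ≤ av (fun p : G × G =>
      ind ((p.1 * f (∏ j, d j ^ ((w j).1 : ℕ)), f (∏ j, d j ^ ((w j).2 : ℕ)) * p.2) ∈ S)) := by
    intro w
    have h1 : c ≤ av (fun p : G × G => ind (p ∈ S)) := by
      have h2 : ∑ p : G × G, ind (p ∈ S) = S.card := by
        rw [← Finset.sum_subset (Finset.subset_univ S)]
        · rw [Finset.sum_congr rfl (g := fun _ => (1 : ℝ))]
          · simp
          · intro p hp
            exact ind_true hp
        · intro p _ hp
          exact ind_false hp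
      unfold av
      rw [h2, le_div_iff₀ (by rw [Fintype.card_prod]; have : 0 < Fintype.card G := Fintype.card_pos; positivity)]
      rw [Fintype.card_prod]
      push_cast
      rw [← sq]; exact hS
    rw [av_equiv (Equiv.prodCongr (Equiv.mulRight (f (∏ j, d j ^ ((w j).1 : ℕ))))
      (Equiv.mulLeft (f (∏ j, d j ^ ((w j).2 : ℕ)))))] at h1
    exact h1
  have hav2 := le_av hav
  rw [av_comm] at hav2
  obtain ⟨⟨g, g'⟩, hgg⟩ := exists_le_of_le_av hav2
  obtain ⟨v, hv, hvS⟩ := hn {w | (g * f (∏ j, d j ^ ((w j).1 : ℕ)), f (∏ j, d j ^ ((w j).2 : ℕ)) * g') ∈ S} hgg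
  have hB := blk_SInj hd hv
  obtain ⟨W, W', h1, h2, h3, h4, h5⟩ := findW i (blk d v) hB
  set C1 := ∏ j, Sum.elim (fun l : Fin (i + 2) × Fin 2 => d j ^ (l.1 : ℕ)) (fun _ => 1) (v j) with hC1
  set C2 := ∏ j, Sum.elim (fun l : Fin (i + 2) × Fin 2 => d j ^ (l.2 : ℕ)) (fun _ => 1) (v j) with hC2
  have hcell : ∀ (a : Fin (i + 1) → Fin (i + 2)) (b : Fin 2),
      (g * f C1 * f (∏ j, blk d v j ^ (a j : ℕ)), f (blk d v 0 ^ (b : ℕ)) * (f C2 * g')) ∈ S := by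
    intro a b
    have h := hvS (fun j => (a j, if j = 0 then b else 0))
    have e1 := evprod d v (fun l => (l.1 : ℕ)) (fun j => (a j, if j = 0 then b else 0))
    have e2 := evprod d v (fun l => (l.2 : ℕ)) (fun j => (a j, if j = 0 then b else 0))
    simp only [Set.mem_ofPred_eq] at h
    rw [e1, e2, ← hC1, ← hC2] at h
    have e3 : ∏ j, blk d v j ^ (((if j = 0 then b else 0 : Fin 2)) : ℕ) = blk d v 0 ^ (b : ℕ) := by
      rw [Fin.prod_univ_succ]
      simp
    rw [e3, mul_comm C2, map_mul, map_mul] at h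
    simpa only [mul_assoc] using h
  refine ⟨g * f C1, f C2 * g', blk d v 0, W, W', ?_, h1, h2, h3, h4, ?_⟩
  · intro h0
    have := hB (fun j => if j = 0 then 1 else 0) (fun _ => 0) (by
      rw [Fin.prod_univ_succ]
      simp [h0])
    have := congrFun this 0
    simp at this
  · intro w hw
    obtain ⟨a, rfl⟩ := h5 w hw
    have c0 := hcell a 0
    have c1 := hcell a 1
    simp only [Fin.val_zero, Fin.val_one, pow_zero, pow_one, map_one, one_mul] at c0 c1
    exact ⟨c0, c1⟩

end BES

theorem stmt_17 (k : ℕ) (hk : 6 ≤ k) (c : ℝ) (hc : 0 < c) :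
    ∃ N : ℕ, ∀ (G : Type) [Group G] [Fintype G] [DecidableEq G],
      N < Fintype.card G →
      ∀ S : Finset (G × G), c * (Fintype.card G : ℝ) ^ 2 ≤ S.card →
        ∃ T : Finset G, T.card = k ∧
          k - 3 ≤ (S.filter fun p => p.1 ∈ T ∧ p.2 ∈ T ∧ p.1 * p.2 ∈ T).card := by
  classical
  obtain ⟨M, hM⟩ := BES.struct ((k - 3) / 2) c hc
  obtain ⟨N, hN⟩ := BES.big_ab (M + 1)
  refine ⟨N + k, fun G _ _ _ hG S hS => ?_⟩
  obtain ⟨H, hH, hHM⟩ := hN G (by omega)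
  let inst : CommGroup H := { (inferInstance : Group H) with
    mul_comm := fun a b => Subtype.ext (hH a a.2 b b.2) }
  obtain ⟨g, g', D, W, W', hD, hWW, hW, hW', hWD, hcell⟩ := hM G H H.subtype (by
    rw [← Nat.card_eq_fintype_card, BES.fc_eq]; omega) S hS
  obtain ⟨V, hWV, hVW, hV⟩ := Finset.exists_subsuperset_card_eq hWW (n := k - 3 - (k - 3) / 2)
    (by omega) (by omega)
  have hinj : Function.Injective H.subtype := H.subtype_injective
  let T0 : Finset G := ({g', H.subtype D * g'} ∪ V.image (fun w => g * H.subtype w)) ∪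
    W'.image (fun w => g * H.subtype w * g')
  have hT0 : T0.card ≤ k := by
    have a1 : ({g', H.subtype D * g'} : Finset G).card ≤ 2 := Finset.card_le_two
    have a2 : (V.image (fun w => g * H.subtype w)).card ≤ V.card := Finset.card_image_le
    have a3 : (W'.image (fun w => g * H.subtype w * g')).card ≤ W'.card := Finset.card_image_le
    have a4 := Finset.card_union_le ({g', H.subtype D * g'} ∪ V.image (fun w => g * H.subtype w))
      (W'.image (fun w => g * H.subtype w * g'))
    have a5 := Finset.card_union_le ({g', H.subtype D * g'} : Finset G) (V.image (fun w => g * H.subtype w))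
    simp only [T0]
    omega
  obtain ⟨T, hT0T, hTc⟩ := Finset.exists_superset_card_eq hT0 (by omega : k ≤ Fintype.card G)
  refine ⟨T, hTc, ?_⟩
  have m1 : g' ∈ T := hT0T (by simp [T0])
  have m2 : H.subtype D * g' ∈ T := hT0T (by simp [T0])
  have m3 : ∀ w ∈ V, g * H.subtype w ∈ T := fun w hw => hT0T
    (Finset.mem_union_left _ (Finset.mem_union_right _ (Finset.mem_image_of_mem _ hw)))
  have m4 : ∀ w ∈ W', g * H.subtype w * g' ∈ T := fun w hw => hT0T
    (Finset.mem_union_right _ (Finset.mem_image_of_mem (fun w => g * H.subtype w * g') hw))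
  let C1 : Finset (G × G) := V.image (fun w => (g * H.subtype w, g'))
  let C2 : Finset (G × G) := W.image (fun w => (g * H.subtype w, H.subtype D * g'))
  have hC1 : C1.card = V.card := by
    apply Finset.card_image_of_injective
    intro x y hxy
    exact hinj (mul_left_cancel (Prod.ext_iff.mp hxy).1)
  have hC2 : C2.card = W.card := by
    apply Finset.card_image_of_injective
    intro x y hxy
    exact hinj (mul_left_cancel (Prod.ext_iff.mp hxy).1)
  have hdis : Disjoint C1 C2 := by
    rw [Finset.disjoint_left]
    intro p hp1 hp2
    obtain ⟨x, _, rfl⟩ := Finset.mem_image.mp hp1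
    obtain ⟨y, _, hy⟩ := Finset.mem_image.mp hp2
    have h1 : H.subtype D * g' = g' := (Prod.ext_iff.mp hy).2
    have h2 : H.subtype D = 1 := by simpa using h1
    exact hD (hinj (h2.trans (map_one H.subtype).symm))
  have hsub : C1 ∪ C2 ⊆ S.filter fun p => p.1 ∈ T ∧ p.2 ∈ T ∧ p.1 * p.2 ∈ T := by
    intro p hp
    rcases Finset.mem_union.mp hp with hp | hp
    · obtain ⟨w, hw, rfl⟩ := Finset.mem_image.mp hp
      exact Finset.mem_filter.mpr ⟨(hcell w (hVW hw)).1, m3 w hw, m1, m4 w (hVW hw)⟩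
    · obtain ⟨w, hw, rfl⟩ := Finset.mem_image.mp hp
      refine Finset.mem_filter.mpr ⟨(hcell w (hWW hw)).2, m3 w (hWV hw), m2, ?_⟩
      have := m4 _ (hWD w hw)
      rw [map_mul] at this
      simpa only [mul_assoc] using this
  have := Finset.card_le_card hsub
  rw [Finset.card_union_of_disjoint hdis, hC1, hC2] at this
  refine le_trans ?_ this
  omega
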